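/- If for every multi-index α ∈ {0,1}^d there is a constant c_1 with ⟨L_α v_α, v_α⟩ ≤ c_1 ⟨(A + h^{-2} M^d) v_α, v_α⟩ for all v_α ∈ S_α, then the additive subspace correction smoother L = Σ_{α∈{0,1}^d} Q_α′ L_α Q_α satisfies ‖(I − T_c)v‖_L ≤ c ‖v‖_A for all v ∈ S^d, where T_c is the a(·,·)-orthogonal projector onto the coarse space (S_c)^d and c is independent of the mesh size h and the spline degree p (it may depend on d and c_1). -/

import Mathlib

noncomputable section

open MeasureTheory Set

namespace SplineMG

/-- The `j`-th piece of the uniform partition of `[0,1]` into `m` subintervals of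
length `h = 1/m`; the first and last pieces are extended to `-∞` resp. `+∞`
(the spline is extended polynomially outside `[0,1]`). -/
def pieceSet (m j : ℕ) : Set ℝ :=
  (if j = 0 then Iic ((1 : ℝ) / m) else Icc ((j : ℝ) / m) (((j : ℝ) + 1) / m)) ∪
  (if j = m - 1 then Ici (((m : ℝ) - 1) / m) else ∅)

/-- `u : ℝ → ℝ` belongs to the univariate spline space `S` of degree `p` and maximal
smoothness `C^{p-1}` on the uniform partition of `(0,1)` into `m` intervals of
length `h = 1/m`. -/
def IsSpline (m p : ℕ) (u : ℝ → ℝ) : Prop :=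
  ContDiffOn ℝ (p - 1 : ℕ) u (Ioo (0 : ℝ) 1) ∧
  ∀ j < m, ∃ q : Polynomial ℝ, q.natDegree ≤ p ∧ ∀ x ∈ pieceSet m j, u x = q.eval x

/-- `u` belongs to the subspace `S₀` of `S`: all odd derivatives of order `< p`
vanish at both endpoints. -/
def IsSpline0 (m p : ℕ) (u : ℝ → ℝ) : Prop :=
  IsSpline m p u ∧
  ∀ l : ℕ, 2 * l + 1 < p →
    iteratedDeriv (2 * l + 1) u 0 = 0 ∧ iteratedDeriv (2 * l + 1) u 1 = 0

/-- The `L²(0,1)` inner product. -/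
def ip0 (u v : ℝ → ℝ) : ℝ := ∫ x in Ioo (0 : ℝ) 1, u x * v x

/-- The squared `L²(0,1)` norm `‖u‖₀²`. -/
def l2normSq (u : ℝ → ℝ) : ℝ := ∫ x in Ioo (0 : ℝ) 1, u x ^ 2

/-- The `L²(0,1)` norm `‖u‖₀`. -/
def l2norm (u : ℝ → ℝ) : ℝ := Real.sqrt (l2normSq u)

/-- The squared `H¹(0,1)` seminorm `|u|₁²`. -/
def h1semiSq (u : ℝ → ℝ) : ℝ := ∫ x in Ioo (0 : ℝ) 1, deriv u x ^ 2

/-- The `H¹(0,1)` seminorm `|u|₁`. -/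
def h1semi (u : ℝ → ℝ) : ℝ := Real.sqrt (h1semiSq u)

/-- The squared full `H¹(0,1)` norm. -/
def h1normSq (u : ℝ → ℝ) : ℝ := l2normSq u + h1semiSq u

/-- `u` belongs to `S₁`, the `L²(0,1)`-orthogonal complement of `S₀` in `S`. -/
def IsSpline1 (m p : ℕ) (u : ℝ → ℝ) : Prop :=
  IsSpline m p u ∧ ∀ v, IsSpline0 m p v → ip0 u v = 0

/-- `v = Q₀ u` is the `L²(0,1)`-orthogonal projection of `u` onto `S₀`. -/
def IsL2Proj0 (m p : ℕ) (u v : ℝ → ℝ) : Prop :=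
  IsSpline0 m p v ∧ ∀ w, IsSpline0 m p w → ip0 (u - v) w = 0

/-- The component predicate: `false ↦ S₀`, `true ↦ S₁`. -/
def IsSplineC (m p : ℕ) : Bool → (ℝ → ℝ) → Prop
  | false => IsSpline0 m p
  | true => IsSpline1 m p

/-- The tensor-product spline space `S^d = S ⊗ ⋯ ⊗ S` on `(0,1)^d`. -/
def TensorSpline (d m p : ℕ) : Submodule ℝ ((Fin d → ℝ) → ℝ) :=
  Submodule.span ℝ {u | ∃ f : Fin d → ℝ → ℝ, (∀ i, IsSpline m p (f i)) ∧
    u = fun x => ∏ i, f i (x i)}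

/-- The subspace `S_α = S_{α₁} ⊗ ⋯ ⊗ S_{α_d}` of `S^d`, for `α ∈ {0,1}^d`
(`false ↦ 0`, `true ↦ 1`). -/
def TensorSplineSub (d m p : ℕ) (α : Fin d → Bool) : Submodule ℝ ((Fin d → ℝ) → ℝ) :=
  Submodule.span ℝ {u | ∃ f : Fin d → ℝ → ℝ, (∀ i, IsSplineC m p (α i) (f i)) ∧
    u = fun x => ∏ i, f i (x i)}

/-- The open unit cube `Ω = (0,1)^d`. -/
def cube (d : ℕ) : Set (Fin d → ℝ) := Set.univ.pi fun _ => Ioo (0 : ℝ) 1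

/-- The `i`-th partial derivative. -/
def pd (d : ℕ) (i : Fin d) (u : (Fin d → ℝ) → ℝ) : (Fin d → ℝ) → ℝ :=
  fun x => deriv (fun t => u (Function.update x i t)) (x i)

/-- The `L²(Ω)` inner product on the unit cube. -/
def ipd (d : ℕ) (u v : (Fin d → ℝ) → ℝ) : ℝ := ∫ x in cube d, u x * v x

/-- The squared `L²(Ω)` norm. -/
def l2normSqD (d : ℕ) (u : (Fin d → ℝ) → ℝ) : ℝ := ∫ x in cube d, u x ^ 2

/-- The bilinear form `a(u,v) = ∫_Ω (∇u·∇v + uv) dx`. -/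
def aForm (d : ℕ) (u v : (Fin d → ℝ) → ℝ) : ℝ :=
  ∫ x in cube d, (∑ i, pd d i u x * pd d i v x) + u x * v x

/-- The squared `H¹(Ω)` seminorm. -/
def h1semiSqD (d : ℕ) (u : (Fin d → ℝ) → ℝ) : ℝ :=
  ∫ x in cube d, ∑ i, pd d i u x ^ 2

/-- The squared full `H¹(Ω)` norm. -/
def h1normSqD (d : ℕ) (u : (Fin d → ℝ) → ℝ) : ℝ := l2normSqD d u + h1semiSqD d u

/-- `v = Q_α u` is the `L²(Ω)`-orthogonal projection of `u` onto `S_α`. -/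
def IsL2ProjSub (d m p : ℕ) (α : Fin d → Bool) (u v : (Fin d → ℝ) → ℝ) : Prop :=
  v ∈ TensorSplineSub d m p α ∧ ∀ w ∈ TensorSplineSub d m p α, ipd d (u - v) w = 0

/-- The coarse tensor-product spline space `(S_c)^d` (with `m/2` knot spans of
width `2h` per direction). -/
def TensorSplineCoarse (d m p : ℕ) : Submodule ℝ ((Fin d → ℝ) → ℝ) :=
  TensorSpline d (m / 2) p

/-- `v = T_c u` is the `a(·,·)`-orthogonal (Galerkin) projection of `u` onto `(S_c)^d`. -/
def IsGalerkinCoarseProj (d m p : ℕ) (u v : (Fin d → ℝ) → ℝ) : Prop :=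
  v ∈ TensorSplineCoarse d m p ∧ ∀ w ∈ TensorSplineCoarse d m p, aForm d (u - v) w = 0

end SplineMG

namespace SplineMG

section Abstract
variable {H : Type*} [NormedAddCommGroup H] [InnerProductSpace ℝ H]

theorem dual_bound (T D : H →ₗ[ℝ] H) (hTD : ∀ f g, inner ℝ (T f) g = -inner ℝ f (D g))
    (O : Submodule ℝ H) (h : ℝ) (hO : ∀ f, ∃ g ∈ O, ‖T f - g‖ ≤ h * ‖f‖)
    (r : H) (hr : ∀ g ∈ O, inner ℝ g r = 0) : ‖D r‖ ≤ h * ‖r‖ := by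
  obtain ⟨q, hq, hb⟩ := hO (D r)
  have h1 : ‖D r‖ ^ 2 = -inner ℝ (T (D r) - q) r := by
    rw [inner_sub_left, hr q hq, hTD, real_inner_self_eq_norm_sq]; ring
  have h2 : -inner ℝ (T (D r) - q) r ≤ ‖T (D r) - q‖ * ‖r‖ :=
    (neg_le_abs _).trans (abs_real_inner_le_norm _ _)
  have h3 : ‖T (D r) - q‖ * ‖r‖ ≤ h * ‖D r‖ * ‖r‖ :=
    mul_le_mul_of_nonneg_right hb (norm_nonneg _)
  rcases (norm_nonneg (D r)).eq_or_lt with h0 | h0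
  · have := (norm_nonneg (T (D r) - q)).trans hb
    rw [← h0]
    obtain ⟨q, hq, hb⟩ := hO r
    exact (norm_nonneg _).trans hb
  · nlinarith

theorem proj_exists (O : Submodule ℝ H) [FiniteDimensional ℝ O] (f : H) :
    ∃ g ∈ O, (∀ w ∈ O, inner ℝ w (f - g) = 0) ∧ ‖f - g‖ ≤ ‖f‖ := by
  refine ⟨O.starProjection f, Submodule.starProjection_apply_mem _ _, ?_, ?_⟩
  · intro w hw
    rw [real_inner_comm]
    exact Submodule.starProjection_inner_eq_zero f w hw
  · have h1 := Submodule.starProjection_inner_eq_zero (K := O) f (O.starProjection f)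
      (Submodule.starProjection_apply_mem _ _)
    set g := O.starProjection f
    have : ‖f‖ ^ 2 = ‖f - g‖ ^ 2 + ‖g‖ ^ 2 := by
      have h2 : f = (f - g) + g := by abel
      conv_lhs => rw [h2, @norm_add_sq_real]
      rw [h1]; ring
    exact le_of_sq_le_sq (by nlinarith [sq_nonneg ‖g‖]) (norm_nonneg _)

/-- `(E_p, O_p)`. -/
def EO (T D : H →ₗ[ℝ] H) (E0 : Submodule ℝ H) : ℕ → Submodule ℝ H × Submodule ℝ H
  | 0 => (E0, E0)
  | p + 1 => ((EO T D E0 p).2.map D, (EO T D E0 p).1.map T)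

theorem EO_fin (T D : H →ₗ[ℝ] H) (E0 : Submodule ℝ H) [FiniteDimensional ℝ E0] (p : ℕ) :
    FiniteDimensional ℝ (EO T D E0 p).1 ∧ FiniteDimensional ℝ (EO T D E0 p).2 := by
  induction p with
  | zero => exact ⟨‹_›, ‹_›⟩
  | succ p ih =>
    obtain ⟨h1, h2⟩ := ih
    exact ⟨inferInstanceAs (FiniteDimensional ℝ ((EO T D E0 p).2.map D)),
      inferInstanceAs (FiniteDimensional ℝ ((EO T D E0 p).1.map T))⟩

theorem EO_approx (T D : H →ₗ[ℝ] H) (hTD : ∀ f g, inner ℝ (T f) g = -inner ℝ f (D g))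
    (E0 : Submodule ℝ H) [FiniteDimensional ℝ E0] (h : ℝ) (h0 : 0 ≤ h)
    (hD : ∀ f, ∃ g ∈ E0, ‖D f - g‖ ≤ h * ‖f‖)
    (hT : ∀ f, ∃ g ∈ E0, ‖T f - g‖ ≤ h * ‖f‖) (p : ℕ) :
    (∀ f, ∃ g ∈ (EO T D E0 p).1, ‖D f - g‖ ≤ h * ‖f‖) ∧
    (∀ f, ∃ g ∈ (EO T D E0 p).2, ‖T f - g‖ ≤ h * ‖f‖) := by
  have hDT : ∀ f g, inner ℝ (D f) g = -inner ℝ f (T g) := by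
    intro f g
    rw [real_inner_comm, real_inner_comm (T g) f, hTD]; ring
  induction p with
  | zero => exact ⟨hD, hT⟩
  | succ p ih =>
    obtain ⟨h1, h2⟩ := ih
    obtain ⟨i1, i2⟩ := EO_fin T D E0 p
    constructor
    · intro f
      obtain ⟨g, hg, ho, hn⟩ := proj_exists (EO T D E0 p).2 f
      refine ⟨D g, Submodule.mem_map_of_mem hg, ?_⟩
      rw [← map_sub]
      exact (dual_bound T D hTD _ h h2 _ ho).trans (mul_le_mul_of_nonneg_left hn h0)
    · intro f
      obtain ⟨g, hg, ho, hn⟩ := proj_exists (EO T D E0 p).1 f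
      refine ⟨T g, Submodule.mem_map_of_mem hg, ?_⟩
      rw [← map_sub]
      exact (dual_bound D T hDT _ h h1 _ ho).trans (mul_le_mul_of_nonneg_left hn h0)

theorem EO_main (T D : H →ₗ[ℝ] H) (hTD : ∀ f g, inner ℝ (T f) g = -inner ℝ f (D g))
    (E0 : Submodule ℝ H) [FiniteDimensional ℝ E0] (h : ℝ) (h0 : 0 ≤ h)
    (hD : ∀ f, ∃ g ∈ E0, ‖D f - g‖ ≤ h * ‖f‖)
    (hT : ∀ f, ∃ g ∈ E0, ‖T f - g‖ ≤ h * ‖f‖) (p : ℕ) (f : H) :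
    ∃ g ∈ (EO T D E0 p).2, inner ℝ g (f - g) = 0 ∧ ‖D (f - g)‖ ≤ h * ‖f - g‖ := by
  obtain ⟨i1, i2⟩ := EO_fin T D E0 p
  obtain ⟨g, hg, ho, hn⟩ := proj_exists (EO T D E0 p).2 f
  exact ⟨g, hg, ho g hg, dual_bound T D hTD _ h (EO_approx T D hTD E0 h h0 hD hT p).2 _ ho⟩

end Abstract

abbrev μI : Measure ℝ := volume.restrict (Ioo (0:ℝ) 1)

instance : IsProbabilityMeasure μI := ⟨by simp [μI]⟩

def kf (f : ℝ → ℝ) (x : ℝ) : ℝ := ∫ y in Iic x, f y ∂μI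

theorem kf_congr {f g : ℝ → ℝ} (h : f =ᵐ[μI] g) : kf f = kf g := by
  funext x
  exact integral_congr_ae (ae_restrict_of_ae h)

theorem kf_add {f g : ℝ → ℝ} (hf : Integrable f μI) (hg : Integrable g μI) (x : ℝ) :
    kf (fun y => f y + g y) x = kf f x + kf g x :=
  integral_add hf.integrableOn hg.integrableOn

theorem kf_smul {f : ℝ → ℝ} (c : ℝ) (x : ℝ) :
    kf (fun y => c * f y) x = c * kf f x :=
  integral_const_mul _ _

theorem kf_aesm {f : ℝ → ℝ} (hf : Integrable f μI) : AEStronglyMeasurable (kf f) μI := by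
  have h1 : AEStronglyMeasurable (fun z : ℝ × ℝ => f z.2) (μI.prod μI) :=
    hf.aestronglyMeasurable.comp_snd
  have hs : MeasurableSet {z : ℝ × ℝ | z.2 ≤ z.1} := measurableSet_le measurable_snd measurable_fst
  have h2 := (h1.indicator hs).integral_prod_right'
  refine h2.congr (Filter.Eventually.of_forall fun x => ?_)
  simp only [kf]
  rw [← integral_indicator measurableSet_Iic]
  rfl

theorem kf_bound {f : ℝ → ℝ} (hf : Integrable f μI) (x : ℝ) : ‖kf f x‖ ≤ ∫ y, ‖f y‖ ∂μI :=
  (norm_integral_le_integral_norm _).trans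
    (setIntegral_le_integral hf.norm (Filter.Eventually.of_forall fun _ => norm_nonneg _))

theorem kf_memLp {f : ℝ → ℝ} (hf : Integrable f μI) : MemLp (kf f) 2 μI :=
  MemLp.of_bound (kf_aesm hf) _ (Filter.Eventually.of_forall (kf_bound hf))

theorem kf_fubini {f g : ℝ → ℝ} (hf : Integrable f μI) (hg : Integrable g μI) :
    ∫ x, kf f x * g x ∂μI + ∫ x, f x * kf g x ∂μI = (∫ x, f x ∂μI) * ∫ x, g x ∂μI := by
  have hs : MeasurableSet {z : ℝ × ℝ | z.1 < z.2} := measurableSet_lt measurable_fst measurable_snd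
  have hi : Integrable (indicator {z : ℝ × ℝ | z.1 < z.2} fun z => f z.1 * g z.2) (μI.prod μI) :=
    (hf.mul_prod hg).indicator hs
  have h1 := integral_integral_swap (f := fun y x => indicator {z : ℝ × ℝ | z.1 < z.2}
    (fun z => f z.1 * g z.2) (y, x)) hi
  have h2 : ∀ x, ∫ y, indicator {z : ℝ × ℝ | z.1 < z.2} (fun z => f z.1 * g z.2) (y, x) ∂μI
      = kf f x * g x := by
    intro x
    have : (fun y => indicator {z : ℝ × ℝ | z.1 < z.2} (fun z => f z.1 * g z.2) (y, x)) =
      fun y => indicator (Iio x) f y * g x := by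
      funext y
      by_cases hy : y < x <;> simp [indicator, hy]
    rw [this, integral_mul_const, integral_indicator measurableSet_Iio, kf,
      integral_Iic_eq_integral_Iio]
  have h3 : ∀ y, ∫ x, indicator {z : ℝ × ℝ | z.1 < z.2} (fun z => f z.1 * g z.2) (y, x) ∂μI
      = f y * (∫ x, g x ∂μI) - f y * kf g y := by
    intro y
    have : (fun x => indicator {z : ℝ × ℝ | z.1 < z.2} (fun z => f z.1 * g z.2) (y, x)) =
      fun x => f y * indicator (Ioi y) g x := by
      funext x
      by_cases hy : y < x <;> simp [indicator, hy]
    rw [this, integral_const_mul, integral_indicator measurableSet_Ioi, kf, ← mul_sub]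
    congr 1
    have := integral_add_compl (μ := μI) (measurableSet_Iic (a := y)) hg
    rw [compl_Iic] at this
    linarith
  simp only [h2, h3] at h1
  have hfk : Integrable (fun x => f x * kf g x) μI := by
    refine hf.mul_bdd (c := ∫ y, ‖g y‖ ∂μI) (kf_aesm hg) ?_
    exact Filter.Eventually.of_forall (kf_bound hg)
  rw [integral_sub (hf.mul_const _) hfk, integral_mul_const] at h1
  linarith

theorem kf_one {x : ℝ} (hx : x ∈ Ioo (0:ℝ) 1) : kf (fun _ => 1) x = x := by
  have : Iic x ∩ Ioo 0 1 = Ioc 0 x := by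
    ext y; simp only [mem_inter_iff, mem_Iic, mem_Ioo, mem_Ioc]
    constructor
    · rintro ⟨a, b, c⟩; exact ⟨b, a⟩
    · rintro ⟨a, b⟩; exact ⟨b, a, b.trans_lt hx.2⟩
  simp only [kf, μI]
  rw [Measure.restrict_restrict measurableSet_Iic, this]
  simp [hx.1.le]

abbrev HI := Lp ℝ 2 μI

theorem HI_int (f : HI) : Integrable f μI := (Lp.memLp f).integrable (by norm_num)

theorem HI_inner (f g : HI) : inner ℝ f g = ∫ x, f x * g x ∂μI := by
  rw [L2.inner_def]
  refine integral_congr_ae (Filter.Eventually.of_forall fun x => ?_)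
  simp [mul_comm]

theorem HI_norm (f : HI) : ‖f‖ ^ 2 = ∫ x, f x ^ 2 ∂μI := by
  rw [← real_inner_self_eq_norm_sq, HI_inner]
  simp [pow_two]

theorem HI_add_ae (f g : HI) : (f + g : HI) =ᵐ[μI] fun x => f x + g x := Lp.coeFn_add f g
theorem HI_smul_ae (c : ℝ) (f : HI) : (c • f : HI) =ᵐ[μI] fun x => c * f x := Lp.coeFn_smul c f
theorem HI_sub_ae (f g : HI) : (f - g : HI) =ᵐ[μI] fun x => f x - g x := Lp.coeFn_sub f g

theorem Dmem (f : HI) : MemLp (fun x => kf f x - ∫ t, kf f t ∂μI) 2 μI :=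
  (kf_memLp (HI_int f)).sub (memLp_const _)

theorem kfi {f : ℝ → ℝ} (hf : Integrable f μI) : Integrable (kf f) μI :=
  (kf_memLp hf).integrable (by norm_num)

def Dop : HI →ₗ[ℝ] HI where
  toFun f := (Dmem f).toLp _
  map_add' f g := by
    rw [← MemLp.toLp_add, MemLp.toLp_eq_toLp_iff]
    refine Filter.Eventually.of_forall fun x => ?_
    have h1 : ∀ x, kf (f + g : HI) x = kf f x + kf g x := fun x => by
      rw [kf_congr (HI_add_ae f g), kf_add (HI_int f) (HI_int g)]
    simp only [Pi.add_apply, h1]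
    rw [integral_add (kfi (HI_int f)) (kfi (HI_int g))]; ring
  map_smul' c f := by
    rw [← MemLp.toLp_const_smul, MemLp.toLp_eq_toLp_iff]
    refine Filter.Eventually.of_forall fun x => ?_
    have h1 : ∀ x, kf (c • f : HI) x = c * kf f x := fun x => by
      rw [kf_congr (HI_smul_ae c f), kf_smul]
    simp only [Pi.smul_apply, h1, RingHom.id_apply, smul_eq_mul]
    rw [integral_const_mul]; ring

theorem Dop_ae (f : HI) : Dop f =ᵐ[μI] fun x => kf f x - ∫ t, kf f t ∂μI :=
  (Dmem f).coeFn_toLp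

theorem Tmem (f : HI) : MemLp (fun x => kf f x - (∫ t, f t ∂μI) * kf (fun _ => 1) x) 2 μI :=
  (kf_memLp (HI_int f)).sub ((kf_memLp (integrable_const _)).const_mul _)

def Top : HI →ₗ[ℝ] HI where
  toFun f := (Tmem f).toLp _
  map_add' f g := by
    rw [← MemLp.toLp_add, MemLp.toLp_eq_toLp_iff]
    refine Filter.Eventually.of_forall fun x => ?_
    have h1 : ∀ x, kf (f + g : HI) x = kf f x + kf g x := fun x => by
      rw [kf_congr (HI_add_ae f g), kf_add (HI_int f) (HI_int g)]
    simp only [Pi.add_apply, h1]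
    rw [integral_congr_ae (HI_add_ae f g), integral_add (HI_int f) (HI_int g)]; ring
  map_smul' c f := by
    rw [← MemLp.toLp_const_smul, MemLp.toLp_eq_toLp_iff]
    refine Filter.Eventually.of_forall fun x => ?_
    have h1 : ∀ x, kf (c • f : HI) x = c * kf f x := fun x => by
      rw [kf_congr (HI_smul_ae c f), kf_smul]
    simp only [Pi.smul_apply, h1, RingHom.id_apply, smul_eq_mul]
    rw [integral_congr_ae (HI_smul_ae c f), integral_const_mul]; ring

theorem Top_ae (f : HI) :
    Top f =ᵐ[μI] fun x => kf f x - (∫ t, f t ∂μI) * kf (fun _ => 1) x :=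
  (Tmem f).coeFn_toLp

theorem int_kf_mul {f g : ℝ → ℝ} (hf : Integrable f μI) (hg : Integrable g μI) :
    Integrable (fun x => kf f x * g x) μI := by
  refine hg.bdd_mul (c := ∫ y, ‖f y‖ ∂μI) (kf_aesm hf) ?_
  exact Filter.Eventually.of_forall (kf_bound hf)

theorem Top_Dop (f g : HI) : inner ℝ (Top f) g = -inner ℝ f (Dop g) := by
  have i1 := HI_int f
  have i2 := HI_int g
  have i3 : Integrable (fun _ : ℝ => (1:ℝ)) μI := integrable_const _
  have e1 : inner ℝ (Top f) g = ∫ x, kf f x * g x ∂μI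
      - (∫ t, f t ∂μI) * ∫ x, kf (fun _ => 1) x * g x ∂μI := by
    rw [HI_inner, ← integral_const_mul, ← integral_sub (int_kf_mul i1 i2)
      ((int_kf_mul i3 i2).const_mul _)]
    refine integral_congr_ae ?_
    filter_upwards [Top_ae f] with x hx
    rw [hx]; ring
  have e2 : inner ℝ f (Dop g) = ∫ x, f x * kf g x ∂μI
      - (∫ t, f t ∂μI) * ∫ x, kf g x ∂μI := by
    rw [HI_inner, ← integral_mul_const, ← integral_sub _ (i1.mul_const _)]
    · refine integral_congr_ae ?_
      filter_upwards [Dop_ae g] with x hx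
      rw [hx]; ring
    · exact (int_kf_mul i2 i1).congr (Filter.Eventually.of_forall fun x => mul_comm _ _)
  have e3 := kf_fubini i1 i2
  have e4 := kf_fubini i3 i2
  simp only [one_mul, integral_const, probReal_univ, smul_eq_mul, mul_one] at e4
  rw [e1, e2]
  linear_combination e3 - (∫ t, f t ∂μI) * e4


theorem int_sub_const_sq {α : Type*} [MeasurableSpace α] (ν : Measure α) [IsFiniteMeasure ν]
    {f : α → ℝ} (hf : MemLp f 2 ν) (t : ℝ) : ∫ x, (f x - t) ^ 2 ∂ν =
      ∫ x, f x ^ 2 ∂ν - 2 * t * ∫ x, f x ∂ν + t ^ 2 * ν.real univ := by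
  have i1 : Integrable f ν := hf.integrable (by norm_num)
  have i2 : Integrable (fun x => f x ^ 2) ν := hf.integrable_sq
  have i3 : Integrable (fun x => 2 * t * f x) ν := i1.const_mul _
  have i4 : Integrable (fun x => f x ^ 2 - 2 * t * f x) ν := i2.sub i3
  have h1 : ∫ x, (f x - t) ^ 2 ∂ν = ∫ x, (f x ^ 2 - 2 * t * f x) + t ^ 2 ∂ν :=
    integral_congr_ae (Filter.Eventually.of_forall fun x => by ring)
  rw [h1, integral_add i4 (integrable_const _), integral_sub i2 i3, integral_const_mul,
    integral_const, smul_eq_mul]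
  ring

theorem sq_int_le {α : Type*} [MeasurableSpace α] (ν : Measure α) [IsFiniteMeasure ν] {f : α → ℝ}
    (hf : MemLp f 2 ν) : (∫ x, f x ∂ν) ^ 2 ≤ ν.real univ * ∫ x, f x ^ 2 ∂ν := by
  have i1 : Integrable f ν := hf.integrable (by norm_num)
  have i2 : Integrable (fun x => f x ^ 2) ν := hf.integrable_sq
  have key : ∀ t : ℝ, 0 ≤ ν.real univ * (t * t) + (-2 * ∫ x, f x ∂ν) * t + ∫ x, f x ^ 2 ∂ν := by
    intro t
    have h0 : 0 ≤ ∫ x, (f x - t) ^ 2 ∂ν := integral_nonneg fun x => sq_nonneg _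
    rw [int_sub_const_sq ν hf] at h0
    linarith
  have := discrim_le_zero key
  unfold discrim at this
  nlinarith

def step (m : ℕ) (c : ℕ → ℝ) (x : ℝ) : ℝ := c (min ⌊(m:ℝ) * x⌋₊ (m - 1))

theorem step_meas (m : ℕ) (c : ℕ → ℝ) : Measurable (step m c) := by
  unfold step
  have h1 : Measurable fun x : ℝ => ⌊(m:ℝ) * x⌋₊ := Nat.measurable_floor.comp (measurable_const_mul _)
  have h2 : Measurable fun k : ℕ => c (min k (m - 1)) := measurable_from_top
  exact h2.comp h1

theorem step_bdd (m : ℕ) (c : ℕ → ℝ) (x : ℝ) : ‖step m c x‖ ≤ ∑ j ∈ Finset.range (m - 1 + 1), ‖c j‖ := by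
  unfold step
  exact Finset.single_le_sum (f := fun j => ‖c j‖) (fun _ _ => norm_nonneg _)
    (Finset.mem_range.2 (by omega))

theorem step_memLp (m : ℕ) (c : ℕ → ℝ) : MemLp (step m c) 2 μI :=
  MemLp.of_bound (step_meas m c).aestronglyMeasurable _
    (Filter.Eventually.of_forall (step_bdd m c))

def extF (m : ℕ) (c : Fin m → ℝ) (j : ℕ) : ℝ := if h : j < m then c ⟨j, h⟩ else 0

def stepL (m : ℕ) : (Fin m → ℝ) →ₗ[ℝ] HI where
  toFun c := (step_memLp m (extF m c)).toLp _
  map_add' c e := by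
    rw [← MemLp.toLp_add, MemLp.toLp_eq_toLp_iff]
    refine Filter.Eventually.of_forall fun x => ?_
    simp only [step, extF, Pi.add_apply]
    split_ifs <;> simp
  map_smul' c f := by
    rw [← MemLp.toLp_const_smul, MemLp.toLp_eq_toLp_iff]
    refine Filter.Eventually.of_forall fun x => ?_
    simp only [step, extF, Pi.smul_apply]
    split_ifs <;> simp

def E0 (m : ℕ) : Submodule ℝ HI := LinearMap.range (stepL m)

instance (m : ℕ) : FiniteDimensional ℝ (E0 m) :=
  inferInstanceAs (FiniteDimensional ℝ (LinearMap.range (stepL m)))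

theorem E0_rep (m : ℕ) (f : HI) (hf : f ∈ E0 m) : ∃ c, f =ᵐ[μI] step m c := by
  obtain ⟨c, rfl⟩ := hf
  exact ⟨extF m c, (step_memLp m (extF m c)).coeFn_toLp⟩

theorem E0_mem (m : ℕ) (hm : 1 ≤ m) (c : ℕ → ℝ) : (step_memLp m c).toLp _ ∈ E0 m := by
  refine ⟨fun j => c j, ?_⟩
  simp only [stepL, LinearMap.coe_mk, AddHom.coe_mk]
  rw [MemLp.toLp_eq_toLp_iff]
  refine Filter.Eventually.of_forall fun x => ?_
  simp only [step, extF]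
  rw [dif_pos (by omega)]

theorem base_approx (m : ℕ) (hm : 1 ≤ m) {f : ℝ → ℝ} (hf : MemLp f 2 μI) :
    ∫ x, (kf f x - step m (fun j => kf f (j / m)) x) ^ 2 ∂μI ≤ (1 / (m:ℝ)) ^ 2 * ∫ x, f x ^ 2 ∂μI := by
  have hm0 : (0:ℝ) < m := by exact_mod_cast hm
  have hf1 : Integrable f μI := hf.integrable (by norm_num)
  have hf2 : Integrable (fun x => f x ^ 2) μI := hf.integrable_sq
  set h : ℝ := 1 / (m:ℝ) with hh
  have h0 : 0 < h := by positivity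
  have hS : MeasurableSet {z : ℝ × ℝ | z.1 - h < z.2 ∧ z.2 ≤ z.1} :=
    (measurableSet_lt (measurable_fst.sub_const _) measurable_snd).inter
      (measurableSet_le measurable_snd measurable_fst)
  set F : ℝ → ℝ → ℝ := fun x y =>
    indicator {z : ℝ × ℝ | z.1 - h < z.2 ∧ z.2 ≤ z.1} (fun z => f z.2 ^ 2) (x, y) with hF
  have hFi : Integrable (Function.uncurry F) (μI.prod μI) := by
    have : Integrable (fun z : ℝ × ℝ => f z.2 ^ 2) (μI.prod μI) := hf2.comp_snd μI
    exact this.indicator hS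
  have pt : ∀ x ∈ Ioo (0:ℝ) 1, (kf f x - step m (fun j => kf f (j / m)) x) ^ 2 ≤
      h * ∫ y, F x y ∂μI := by
    intro x hx
    set j := ⌊(m:ℝ) * x⌋₊ with hj
    have hj1 : (j:ℝ) ≤ m * x := Nat.floor_le (by have := hx.1; positivity)
    have hj2 : m * x < (j:ℝ) + 1 := Nat.lt_floor_add_one _
    have hjm : j < m := by
      have : (j:ℝ) < m := by nlinarith [hx.2]
      exact_mod_cast this
    have hst : step m (fun j => kf f (j / m)) x = kf f (j / m) := by
      simp only [step, ← hj]
      rw [min_eq_left (by omega)]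
    set a : ℝ := j / m with ha
    have hax : a ≤ x := by rw [ha, div_le_iff₀ hm0]; linarith
    have hxa : x - h < a := by
      rw [ha, hh, sub_lt_iff_lt_add, ← add_div, lt_div_iff₀ hm0]; linarith
    have e1 : kf f x - kf f a = ∫ y in Ioc a x, f y ∂μI := by
      simp only [kf]
      have := setIntegral_union (μ := μI) (Iic_disjoint_Ioc (le_refl a)) measurableSet_Ioc
        hf1.integrableOn hf1.integrableOn (f := f) (s := Iic a) (t := Ioc a x)
      rw [Iic_union_Ioc_eq_Iic hax] at this
      rw [this]; ring
    rw [hst, e1]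
    have e2 := sq_int_le (μI.restrict (Ioc a x)) (hf.restrict _)
    have e3 : (μI.restrict (Ioc a x)).real univ ≤ h := by
      rw [measureReal_restrict_apply_univ]
      have : μI.real (Ioc a x) ≤ (volume : Measure ℝ).real (Ioc a x) :=
        ENNReal.toReal_mono (by simp) (Measure.restrict_le_self _)
      refine this.trans ?_
      rw [Real.volume_real_Ioc_of_le hax]; linarith
    have e4 : ∫ y in Ioc a x, f y ^ 2 ∂μI ≤ ∫ y, F x y ∂μI := by
      rw [← integral_indicator measurableSet_Ioc]
      have hFx : (fun y => F x y) = indicator (Ioc (x - h) x) (fun y => f y ^ 2) := by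
        funext y; simp [hF, indicator]
      rw [hFx]
      refine integral_mono (hf2.indicator measurableSet_Ioc) (hf2.indicator measurableSet_Ioc) ?_
      intro y
      exact indicator_le_indicator_of_subset (Ioc_subset_Ioc_left hxa.le) (fun y => sq_nonneg _) y
    refine e2.trans ?_
    have e5 : 0 ≤ ∫ y in Ioc a x, f y ^ 2 ∂μI := integral_nonneg fun _ => sq_nonneg _
    exact mul_le_mul e3 e4 e5 h0.le
  have hL : Integrable (fun x => (kf f x - step m (fun j => kf f (j / m)) x) ^ 2) μI :=
    ((kf_memLp hf1).sub (step_memLp m _)).integrable_sq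
  calc _ ≤ ∫ x, h * ∫ y, F x y ∂μI ∂μI := by
        refine integral_mono_ae hL (hFi.integral_prod_left.const_mul _) ?_
        filter_upwards [ae_restrict_mem measurableSet_Ioo] with x hx using pt x hx
    _ = h * ∫ y, ∫ x, F x y ∂μI ∂μI := by
        rw [integral_const_mul, integral_integral_swap hFi]
    _ ≤ h * ∫ y, h * f y ^ 2 ∂μI := by
        refine mul_le_mul_of_nonneg_left ?_ h0.le
        refine integral_mono hFi.integral_prod_right (hf2.const_mul _) ?_
        intro y
        have hFy : (fun x => F x y) = fun x => indicator (Ico y (y + h)) (fun _ => f y ^ 2) x := by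
          funext x; simp only [hF, indicator, mem_ofPred_eq, mem_Ico]
          congr 1
          simp only [eq_iff_iff]
          constructor <;> rintro ⟨a, b⟩ <;> constructor <;> linarith
        simp only [hFy]
        rw [integral_indicator measurableSet_Ico, setIntegral_const, smul_eq_mul]
        refine mul_le_mul_of_nonneg_right ?_ (sq_nonneg _)
        have : μI.real (Ico y (y + h)) ≤ (volume : Measure ℝ).real (Ico y (y + h)) :=
          ENNReal.toReal_mono (by simp) (Measure.restrict_le_self _)
        refine this.trans ?_
        rw [Real.volume_real_Ico_of_le (by linarith)]; linarith
    _ = _ := by rw [integral_const_mul]; ring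

theorem norm_le_of_sq (a b : ℝ) (hb : 0 ≤ b) (h : a ^ 2 ≤ b ^ 2) : a ≤ b :=
  (abs_le.1 (abs_le_of_sq_le_sq h hb)).2

theorem baseD (m : ℕ) (hm : 1 ≤ m) (f : HI) : ∃ g ∈ E0 m, ‖Dop f - g‖ ≤ (1 / (m:ℝ)) * ‖f‖ := by
  have hb := base_approx m hm (Lp.memLp f)
  refine ⟨_, E0_mem m hm (fun j => kf f (j / m) - ∫ t, kf f t ∂μI), ?_⟩
  refine norm_le_of_sq _ _ (by positivity) ?_
  rw [mul_pow, HI_norm, HI_norm]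
  refine le_trans (le_of_eq ?_) hb
  refine integral_congr_ae ?_
  filter_upwards [HI_sub_ae (Dop f) ((step_memLp m _).toLp _), Dop_ae f,
    (step_memLp m (fun j => kf f (j / m) - ∫ t, kf f t ∂μI)).coeFn_toLp] with x h1 h2 h3
  rw [h1, h2, h3]; simp only [step]; ring

theorem baseT (m : ℕ) (hm : 1 ≤ m) (f : HI) : ∃ g ∈ E0 m, ‖Top f - g‖ ≤ (1 / (m:ℝ)) * ‖f‖ := by
  set F := ∫ t, f t ∂μI with hF
  have hmem : MemLp (fun x => f x - F) 2 μI := (Lp.memLp f).sub (memLp_const _)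
  have hb := base_approx m hm hmem
  refine ⟨_, E0_mem m hm (fun j => kf (fun x => f x - F) (j / m)), ?_⟩
  refine norm_le_of_sq _ _ (by positivity) ?_
  rw [mul_pow, HI_norm, HI_norm]
  have i1 := HI_int f
  have hle : ∫ x, (f x - F) ^ 2 ∂μI ≤ ∫ x, f x ^ 2 ∂μI := by
    rw [int_sub_const_sq _ (Lp.memLp f), ← hF, probReal_univ]
    nlinarith [sq_nonneg F]
  refine le_trans (le_of_eq ?_) (hb.trans (mul_le_mul_of_nonneg_left hle (by positivity)))
  refine integral_congr_ae ?_
  have hk : ∀ x, kf (fun x => f x - F) x = kf f x - F * kf (fun _ => 1) x := by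
    intro x
    have := kf_add i1 (integrable_const (-F * 1)) x
    rw [kf_smul] at this
    rw [show (fun x => f x - F) = fun x => f x + -F * 1 by funext; ring, this]; ring
  filter_upwards [HI_sub_ae (Top f) ((step_memLp m _).toLp _), Top_ae f,
    (step_memLp m (fun j => kf (fun x => f x - F) (j / m))).coeFn_toLp] with x h1 h2 h3
  rw [h1, h2, h3, hk]


theorem mem_piece {m j : ℕ} (hj : j < m) (x : ℝ) : x ∈ pieceSet m j ↔
    (j = 0 ∨ (j:ℝ) ≤ m * x) ∧ (j = m - 1 ∨ m * x ≤ (j:ℝ) + 1) := by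
  have hm0 : (0:ℝ) < m := by exact_mod_cast (by omega : 0 < m)
  unfold pieceSet
  by_cases h0 : j = 0 <;> by_cases h1 : j = m - 1
  · have : m = 1 := by omega
    subst this; subst h0
    simp only [if_true, mem_union, mem_Iic, mem_Ici]
    simp
    rcases le_total x 1 with h | h
    · exact Or.inl h
    · exact Or.inr (by linarith)
  · rw [if_pos h0, if_neg h1]
    subst h0
    simp only [union_empty, mem_Iic, true_or, true_and, h1, false_or]
    rw [le_div_iff₀ hm0]; simp [mul_comm]
  · rw [if_neg h0, if_pos h1]
    have hjm : (j:ℝ) = m - 1 := by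
      have : j + 1 = m := by omega
      rw [← this]; push_cast; ring
    simp only [h0, false_or, mem_union, mem_Icc, mem_Ici]
    simp only [show (j = m - 1) = True by simp [h1], true_or, and_true]
    rw [div_le_iff₀ hm0, div_le_iff₀ hm0, ← hjm, mul_comm x]
    tauto
  · rw [if_neg h0, if_neg h1]
    simp only [h0, h1, false_or, union_empty, mem_Icc]
    rw [div_le_iff₀ hm0, le_div_iff₀ hm0, mul_comm x]

def pieceInt (m j : ℕ) : Set ℝ :=
  {x | (j = 0 ∨ (j:ℝ) < m * x) ∧ (j = m - 1 ∨ m * x < (j:ℝ) + 1)}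

theorem mem_pieceInt_of_between {m j : ℕ} (hj : j < m) {a b t : ℝ} (ha : a ∈ pieceSet m j)
    (hb : b ∈ pieceSet m j) (h1 : a < t) (h2 : t < b) : t ∈ pieceInt m j := by
  have hm0 : (0:ℝ) < m := by exact_mod_cast (by omega : 0 < m)
  rw [mem_piece hj] at ha hb
  refine ⟨ha.1.imp id fun h => ?_, hb.2.imp id fun h => ?_⟩ <;> nlinarith

theorem left_mem_piece {m j : ℕ} (hj : j < m) : (j:ℝ) / m ∈ pieceSet m j := by
  have hm0 : (0:ℝ) < m := by exact_mod_cast (by omega : 0 < m)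
  rw [mem_piece hj, mul_div_cancel₀ _ hm0.ne']
  exact ⟨Or.inr le_rfl, Or.inr (by linarith)⟩

theorem step_pieceInt {m j : ℕ} (hj : j < m) (c : ℕ → ℝ) {x : ℝ} (hx : x ∈ pieceInt m j) :
    step m c x = c j := by
  have hm0 : (0:ℝ) < m := by exact_mod_cast (by omega : 0 < m)
  obtain ⟨h1, h2⟩ := hx
  unfold step
  congr 1
  have g1 : j ≤ ⌊(m:ℝ) * x⌋₊ := by
    rcases h1 with h1 | h1
    · omega
    · exact Nat.le_floor h1.le
  rcases h2 with h2 | h2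
  · omega
  · have g2 : ⌊(m:ℝ) * x⌋₊ < j + 1 := by
      rw [Nat.floor_lt' (by omega)]; exact_mod_cast h2
    omega

theorem poly_antideriv (q : Polynomial ℝ) (p : ℕ) (hq : q.natDegree ≤ p) :
    ∃ Q : Polynomial ℝ, Q.natDegree ≤ p + 1 ∧ Q.derivative = q := by
  refine ⟨∑ n ∈ Finset.range (p + 1), Polynomial.monomial (n + 1) (q.coeff n / (n + 1)), ?_, ?_⟩
  · refine Polynomial.natDegree_sum_le_of_forall_le _ _ fun n hn => ?_
    refine (Polynomial.natDegree_monomial_le _).trans ?_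
    have := Finset.mem_range.1 hn; omega
  · conv_rhs => rw [Polynomial.as_sum_range' q (p + 1) (by omega)]
    rw [Polynomial.derivative_sum]
    refine Finset.sum_congr rfl fun n _ => ?_
    rw [Polynomial.derivative_monomial]
    have : (n:ℝ) + 1 ≠ 0 := by positivity
    simp only [Nat.add_sub_cancel]
    push_cast
    rw [div_mul_cancel₀ _ this]

theorem prim_poly {m j p : ℕ} (hj : j < m) {f : ℝ → ℝ}
    (hi : ∀ a b, IntervalIntegrable f volume a b) (q : Polynomial ℝ) (hq : q.natDegree ≤ p)
    (hf : ∀ x ∈ pieceInt m j, f x = q.eval x) (c : ℝ) :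
    ∃ Q : Polynomial ℝ, Q.natDegree ≤ p + 1 ∧
      ∀ x ∈ pieceSet m j, c + ∫ t in (0:ℝ)..x, f t = Q.eval x := by
  obtain ⟨Q, hQ, hd⟩ := poly_antideriv q p hq
  set a : ℝ := (j:ℝ) / m with ha
  refine ⟨Q + Polynomial.C (c + (∫ t in (0:ℝ)..a, f t) - Q.eval a), ?_, ?_⟩
  · exact (Polynomial.natDegree_add_C).trans_le hQ
  · intro x hx
    rw [← intervalIntegral.integral_add_adjacent_intervals (hi 0 a) (hi a x)]
    have h1 : ∫ t in a..x, f t = ∫ t in a..x, q.eval t := by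
      rcases le_total a x with h | h
      · refine intervalIntegral.integral_congr_Ioo_of_le h fun t ht => ?_
        exact hf t (mem_pieceInt_of_between hj (left_mem_piece hj) hx ht.1 ht.2)
      · rw [intervalIntegral.integral_symm, intervalIntegral.integral_symm x a]
        congr 1
        refine intervalIntegral.integral_congr_Ioo_of_le h fun t ht => ?_
        exact hf t (mem_pieceInt_of_between hj hx (left_mem_piece hj) ht.1 ht.2)
    have h2 : ∫ t in a..x, q.eval t = Q.eval x - Q.eval a := by
      refine intervalIntegral.integral_eq_sub_of_hasDerivAt (f := fun t => Q.eval t) (fun t _ => ?_)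
        (q.continuous.intervalIntegrable _ _)
      rw [← hd]; exact Q.hasDerivAt t
    rw [h1, h2]; simp; ring

def G (m : ℕ) : Bool → ℕ → (ℝ → ℝ) → Prop
  | _, 0, g => ∃ c, g = step m c
  | false, p + 1, g => ∃ f, G m true p f ∧ ∃ c, ∀ x, g x = c + ∫ t in (0:ℝ)..x, f t
  | true, p + 1, g => ∃ f, G m false p f ∧ ∫ t in (0:ℝ)..1, f t = 0 ∧
      ∀ x, g x = ∫ t in (0:ℝ)..x, f t

theorem G_succ {m p : ℕ} {b : Bool} {g : ℝ → ℝ} (h : G m b (p + 1) g) :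
    ∃ f, G m (!b) p f ∧ (∃ c, ∀ x, g x = c + ∫ t in (0:ℝ)..x, f t) ∧
      (b = true → g 0 = 0 ∧ g 1 = 0) := by
  cases b with
  | false =>
    obtain ⟨f, hf, c, hc⟩ := h
    exact ⟨f, hf, ⟨c, hc⟩, by simp⟩
  | true =>
    obtain ⟨f, hf, h0, hc⟩ := h
    refine ⟨f, hf, ⟨0, fun x => by rw [hc]; ring⟩, fun _ => ?_⟩
    rw [hc, hc, h0]; simp

theorem G_ii {m p : ℕ} {b : Bool} {g : ℝ → ℝ} (h : G m b p g) :
    ∀ a b, IntervalIntegrable g volume a b := by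
  induction p generalizing b g with
  | zero =>
    obtain ⟨c, rfl⟩ : ∃ c, g = step m c := by cases b <;> exact h
    intro a b
    rw [intervalIntegrable_iff]
    have : IsFiniteMeasure (volume.restrict (uIoc a b)) := ⟨by simp [uIoc]⟩
    refine Integrable.of_bound (step_meas m c).aestronglyMeasurable _
      (Filter.Eventually.of_forall (step_bdd m c))
  | succ p ih =>
    obtain ⟨f, hf, ⟨c, hc⟩, -⟩ := G_succ h
    intro a b
    have : Continuous g := by
      rw [show g = fun x => c + ∫ t in (0:ℝ)..x, f t from funext hc]
      exact continuous_const.add (intervalIntegral.continuous_primitive (ih hf) 0)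
    exact this.intervalIntegrable a b

theorem G_pw {m p : ℕ} {b : Bool} {g : ℝ → ℝ} (h : G m b p g) :
    ∀ j < m, ∃ q : Polynomial ℝ, q.natDegree ≤ p ∧ (∀ x ∈ pieceInt m j, g x = q.eval x) ∧
      (1 ≤ p → ∀ x ∈ pieceSet m j, g x = q.eval x) := by
  have hsub : ∀ j < m, ∀ x ∈ pieceInt m j, x ∈ pieceSet m j := by
    intro j hj x hx
    rw [mem_piece hj]
    exact ⟨hx.1.imp id le_of_lt, hx.2.imp id le_of_lt⟩
  induction p generalizing b g with
  | zero =>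
    obtain ⟨c, rfl⟩ : ∃ c, g = step m c := by cases b <;> exact h
    intro j hj
    refine ⟨Polynomial.C (c j), by simp, fun x hx => ?_, by simp⟩
    rw [step_pieceInt hj c hx]; simp
  | succ p ih =>
    obtain ⟨f, hf, ⟨c, hc⟩, -⟩ := G_succ h
    intro j hj
    obtain ⟨q, hq, hqe, -⟩ := ih hf j hj
    obtain ⟨Q, hQ, hQe⟩ := prim_poly hj (G_ii hf) q hq hqe c
    refine ⟨Q, hQ, fun x hx => ?_, fun _ x hx => ?_⟩
    · rw [hc, hQe x (hsub j hj x hx)]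
    · rw [hc, hQe x hx]

theorem G_smooth {m p : ℕ} {b : Bool} {g : ℝ → ℝ} (h : G m b (p + 1) g) :
    ContDiff ℝ p g ∧ ∀ k < p + 1, (k % 2 = if b then 0 else 1) →
      iteratedDeriv k g 0 = 0 ∧ iteratedDeriv k g 1 = 0 := by
  induction p generalizing b g with
  | zero =>
    obtain ⟨f, hf, ⟨c, hc⟩, h0⟩ := G_succ h
    constructor
    · rw [show g = fun x => c + ∫ t in (0:ℝ)..x, f t from funext hc]
      exact contDiff_zero.2 (continuous_const.add (intervalIntegral.continuous_primitive (G_ii hf) 0))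
    · intro k hk hk2
      obtain rfl : k = 0 := by omega
      cases b with
      | false => simp at hk2
      | true => simpa using h0 rfl
  | succ p ih =>
    obtain ⟨f, hf, ⟨c, hc⟩, h0⟩ := G_succ h
    obtain ⟨i1, i2⟩ := ih hf
    have hd : ∀ x, HasDerivAt g (f x) x := by
      intro x
      rw [show g = fun x => c + ∫ t in (0:ℝ)..x, f t from funext hc]
      exact (intervalIntegral.integral_hasDerivAt_right (G_ii hf _ _)
        (i1.continuous.stronglyMeasurableAtFilter _ _) i1.continuous.continuousAt).const_add c
    have hde : deriv g = f := funext fun x => (hd x).deriv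
    constructor
    · push_cast
      rw [contDiff_succ_iff_deriv]
      exact ⟨fun x => (hd x).differentiableAt, by simp, by rw [hde]; exact i1⟩
    · intro k hk hk2
      cases k with
      | zero => cases b with
        | false => simp at hk2
        | true => simpa using h0 rfl
      | succ k =>
        rw [iteratedDeriv_succ', hde]
        refine i2 k (by omega) ?_
        cases b <;> simp at hk2 ⊢ <;> omega

theorem G_spline0 {m p : ℕ} {g : ℝ → ℝ} (h : G m false (p + 1) g) :
    IsSpline0 m (p + 1) g := by
  obtain ⟨h1, h2⟩ := G_smooth h
  refine ⟨⟨?_, fun j hj => ?_⟩, fun l hl => h2 _ hl (by simp)⟩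
  · simpa using h1.contDiffOn
  · obtain ⟨q, hq, -, hqe⟩ := G_pw h j hj
    exact ⟨q, hq, hqe (by omega)⟩

theorem G_sub_const {m p : ℕ} {g : ℝ → ℝ} (h : G m false p g) (c : ℝ) :
    G m false p (fun x => g x - c) := by
  cases p with
  | zero =>
    obtain ⟨e, rfl⟩ := h
    exact ⟨fun j => e j - c, rfl⟩
  | succ p =>
    obtain ⟨f, hf, e, he⟩ := h
    exact ⟨f, hf, e - c, fun x => by simp only [he]; ring⟩

theorem kf_eq_interval {f : ℝ → ℝ} {x : ℝ} (hx : x ∈ Ioo (0:ℝ) 1) :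
    kf f x = ∫ t in (0:ℝ)..x, f t := by
  have : Iic x ∩ Ioo 0 1 = Ioc 0 x := by
    ext y; simp only [mem_inter_iff, mem_Iic, mem_Ioo, mem_Ioc]
    constructor
    · rintro ⟨a, b, c⟩; exact ⟨b, a⟩
    · rintro ⟨a, b⟩; exact ⟨b, a, b.trans_lt hx.2⟩
  simp only [kf, μI]
  rw [Measure.restrict_restrict measurableSet_Iic, this,
    intervalIntegral.integral_of_le hx.1.le]

theorem int01 (f : ℝ → ℝ) : ∫ t, f t ∂μI = ∫ t in (0:ℝ)..1, f t := by
  rw [intervalIntegral.integral_of_le zero_le_one, integral_Ioc_eq_integral_Ioo]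

theorem EO_rep (m p : ℕ) :
    (∀ f ∈ (EO Top Dop (E0 m) p).1, ∃ g, G m false p g ∧ f =ᵐ[μI] g) ∧
    (∀ f ∈ (EO Top Dop (E0 m) p).2, ∃ g, G m true p g ∧ f =ᵐ[μI] g) := by
  induction p with
  | zero =>
    constructor <;> intro f hf <;> obtain ⟨c, hc⟩ := E0_rep m f hf
    · exact ⟨_, ⟨c, rfl⟩, hc⟩
    · exact ⟨_, ⟨c, rfl⟩, hc⟩
  | succ p ih =>
    constructor
    · rintro _ ⟨f, hf, rfl⟩
      obtain ⟨g, hg, hfg⟩ := ih.2 f hf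
      refine ⟨fun x => -(∫ t, kf f t ∂μI) + ∫ t in (0:ℝ)..x, g t, ⟨g, hg, _, fun x => rfl⟩, ?_⟩
      filter_upwards [Dop_ae f, ae_restrict_mem measurableSet_Ioo] with x h1 h2
      rw [h1, kf_congr hfg, kf_eq_interval h2]; ring
    · rintro _ ⟨f, hf, rfl⟩
      obtain ⟨g, hg, hfg⟩ := ih.1 f hf
      set F := ∫ t, f t ∂μI with hF
      have hFg : F = ∫ t in (0:ℝ)..1, g t := by rw [hF, integral_congr_ae hfg, int01]
      have hs : ∀ x, ∫ t in (0:ℝ)..x, (g t - F) = (∫ t in (0:ℝ)..x, g t) - F * x := by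
        intro x
        rw [intervalIntegral.integral_sub (G_ii hg _ _) (by simp)]
        simp [mul_comm]
      refine ⟨fun x => ∫ t in (0:ℝ)..x, (g t - F), ⟨_, G_sub_const hg F, ?_, fun x => rfl⟩, ?_⟩
      · rw [hs, ← hFg]; ring
      · filter_upwards [Top_ae f, ae_restrict_mem measurableSet_Ioo] with x h1 h2
        rw [h1, kf_congr hfg, kf_eq_interval h2, kf_one h2, hs]

/-- One-dimensional approximation result. -/
theorem approx1D (m p : ℕ) (hm : 1 ≤ m) (u u' : ℝ → ℝ) (hu' : MemLp u' 2 μI)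
    (hu : ∀ x ∈ Ioo (0:ℝ) 1, u x = u 0 + ∫ t in (0:ℝ)..x, u' t) :
    ∃ w w' : ℝ → ℝ, IsSpline0 m (p + 1) w ∧ deriv w =ᵐ[μI] w' ∧
      ∫ x, w' x * (u' x - w' x) ∂μI = 0 ∧
      ∫ x, (u x - w x) ^ 2 ∂μI ≤ (1 / (m:ℝ)) ^ 2 * ∫ x, (u' x - w' x) ^ 2 ∂μI := by
  set f : HI := hu'.toLp u' with hf
  have hfu : f =ᵐ[μI] u' := hu'.coeFn_toLp
  obtain ⟨g, hg, h1, h2⟩ := EO_main Top Dop Top_Dop (E0 m) (1 / (m:ℝ)) (by positivity)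
    (baseD m hm) (baseT m hm) p f
  obtain ⟨g', hg', hgg⟩ := (EO_rep m p).2 g hg
  have hsub : (f - g : HI) =ᵐ[μI] fun x => u' x - g' x := by
    filter_upwards [HI_sub_ae f g, hfu, hgg] with x a1 a2 a3
    rw [a1, a2, a3]
  set M := ∫ t, kf (f - g : HI) t ∂μI with hM
  refine ⟨fun x => (u 0 + M) + ∫ t in (0:ℝ)..x, g' t, g', G_spline0 ⟨g', hg', _, fun x => rfl⟩,
    ?_, ?_, ?_⟩
  · have := (G_ii hg' 0 1).ae_hasDerivAt_integral
    filter_upwards [ae_restrict_of_ae this, ae_restrict_mem measurableSet_Ioo] with x a1 hx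
    refine ((a1 ?_ 0 ?_).const_add _).deriv
    · rw [uIcc_of_le zero_le_one]; exact Ioo_subset_Icc_self hx
    · simp
  · rw [HI_inner] at h1
    rw [← h1]
    refine integral_congr_ae ?_
    filter_upwards [hgg, hsub] with x a1 a2
    rw [a1, a2]
  · have h3 := pow_le_pow_left₀ (norm_nonneg _) h2 2
    rw [mul_pow, HI_norm, HI_norm] at h3
    refine (le_of_eq ?_).trans (h3.trans (le_of_eq ?_))
    · refine integral_congr_ae ?_
      filter_upwards [Dop_ae (f - g), ae_restrict_mem measurableSet_Ioo] with x a1 hx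
      have iu : IntervalIntegrable u' volume 0 x := by
        rw [intervalIntegrable_iff_integrableOn_Ioo_of_le hx.1.le]
        exact IntegrableOn.mono_set (hu'.integrable (by norm_num) : IntegrableOn u' (Ioo 0 1) volume)
          (Ioo_subset_Ioo_right hx.2.le)
      rw [a1, kf_congr hsub, kf_eq_interval hx, hu x hx,
        intervalIntegral.integral_sub iu (G_ii hg' _ _), hM, kf_congr hsub]
      ring
    · congr 1
      refine integral_congr_ae ?_
      filter_upwards [hsub] with x a2
      rw [a2]


theorem pieceInt_sub {m j : ℕ} (hj : j < m) : pieceInt m j ⊆ pieceSet m j := by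
  intro x hx
  rw [mem_piece hj]
  exact ⟨hx.1.imp id le_of_lt, hx.2.imp id le_of_lt⟩

theorem pieceInt_open (m j : ℕ) : IsOpen (pieceInt m j) := by
  have h1 : IsOpen {x : ℝ | j = 0 ∨ (j:ℝ) < m * x} := by
    by_cases h : j = 0
    · simp [h]
    · simp only [h, false_or]; exact isOpen_lt (by fun_prop) (by fun_prop)
  have h2 : IsOpen {x : ℝ | j = m - 1 ∨ m * x < (j:ℝ) + 1} := by
    by_cases h : j = m - 1
    · simp [← h]
    · simp only [h, false_or]; exact isOpen_lt (by fun_prop) (by fun_prop)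
  exact h1.inter h2

theorem piece_closed {m j : ℕ} (hj : j < m) : IsClosed (pieceSet m j) := by
  unfold pieceSet
  refine IsClosed.union ?_ ?_ <;> split_ifs
  · exact isClosed_Iic
  · exact isClosed_Icc
  · exact isClosed_Ici
  · exact isClosed_empty

theorem piece_convex {m j : ℕ} (hj : j < m) : Convex ℝ (pieceSet m j) := by
  refine OrdConnected.convex ⟨fun x hx y hy z hz => ?_⟩
  rcases hz.1.eq_or_lt with h | h
  · rwa [← h]
  rcases hz.2.eq_or_lt with h' | h'
  · rwa [h']
  exact pieceInt_sub hj (mem_pieceInt_of_between hj hx hy h h')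

theorem Ioo_sub_pieceInt {m j : ℕ} (hj : j < m) :
    Ioo ((j:ℝ) / m) (((j:ℝ) + 1) / m) ⊆ pieceInt m j := by
  have hm0 : (0:ℝ) < m := by exact_mod_cast (by omega : 0 < m)
  intro x hx
  have h1 := hx.1
  have h2 := hx.2
  rw [div_lt_iff₀ hm0] at h1
  rw [lt_div_iff₀ hm0] at h2
  exact ⟨Or.inr (by linarith), Or.inr (by linarith)⟩

theorem node_lt {m j : ℕ} (hj : j < m) : (j:ℝ) / m < ((j:ℝ) + 1) / m := by
  have hm0 : (0:ℝ) < m := by exact_mod_cast (by omega : 0 < m)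
  gcongr; linarith

theorem piece_uniqueDiff {m j : ℕ} (hj : j < m) : UniqueDiffOn ℝ (pieceSet m j) := by
  refine uniqueDiffOn_convex (piece_convex hj) ?_
  refine Nonempty.mono (interior_maximal (pieceInt_sub hj) (pieceInt_open m j)) ?_
  exact (nonempty_Ioo.2 (node_lt hj)).mono (Ioo_sub_pieceInt hj)

theorem piece_cover {m : ℕ} (hm : 1 ≤ m) (x : ℝ) : ∃ j < m, x ∈ pieceSet m j := by
  refine ⟨min ⌊(m:ℝ) * x⌋₊ (m - 1), by omega, ?_⟩
  rw [mem_piece (by omega)]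
  have h2 := Nat.lt_floor_add_one ((m:ℝ) * x)
  constructor
  · by_cases h : ⌊(m:ℝ) * x⌋₊ = 0
    · left; omega
    · right
      have := (Nat.floor_pos.1 (Nat.pos_of_ne_zero h))
      refine le_trans ?_ (Nat.floor_le (by linarith : 0 ≤ (m:ℝ) * x))
      exact_mod_cast min_le_left _ _
  · rcases le_total ⌊(m:ℝ) * x⌋₊ (m - 1) with h | h
    · right; rw [min_eq_left h]; exact h2.le
    · left; rw [min_eq_right h]

def knots (m : ℕ) : Set ℝ := (fun i : ℕ => (i:ℝ) / m) '' {i | 1 ≤ i ∧ i < m}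

theorem knots_finite (m : ℕ) : (knots m).Finite :=
  ((finite_lt_nat m).subset fun _ h => h.2).image _

theorem mem_pieceInt_of_not_knot {m j : ℕ} (hj : j < m) {x : ℝ} (hx : x ∈ pieceSet m j)
    (hk : x ∉ knots m) : x ∈ pieceInt m j := by
  have hm0 : (0:ℝ) < m := by exact_mod_cast (by omega : 0 < m)
  rw [mem_piece hj] at hx
  constructor
  · by_cases h : j = 0
    · exact Or.inl h
    · refine Or.inr (lt_of_le_of_ne (hx.1.resolve_left h) fun he => hk ⟨j, ⟨by omega, hj⟩, ?_⟩)
      simp only; rw [he]; field_simp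
  · by_cases h : j = m - 1
    · exact Or.inl h
    · refine Or.inr (lt_of_le_of_ne (hx.2.resolve_left h) fun he =>
        hk ⟨j + 1, ⟨by omega, by omega⟩, ?_⟩)
      simp only; push_cast; rw [← he]; field_simp

theorem knots_sub {m : ℕ} {x : ℝ} (hx : x ∈ knots m) : x ∈ Ioo (0:ℝ) 1 := by
  obtain ⟨i, ⟨h1, h2⟩, rfl⟩ := hx
  have hm0 : (0:ℝ) < m := by exact_mod_cast (by omega : 0 < m)
  have h1' : (0:ℝ) < i := by exact_mod_cast h1
  have h2' : (i:ℝ) < m := by exact_mod_cast h2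
  exact ⟨by positivity, by rw [div_lt_one hm0]; exact h2'⟩

section
variable {m p : ℕ} {u : ℝ → ℝ}

theorem spl_cont (hm : 1 ≤ m) (hu : IsSpline m p u) : Continuous u := by
  have hl : LocallyFinite fun j : Fin m => pieceSet m j := locallyFinite_of_finite _
  refine hl.continuous ?_ (fun j => piece_closed j.2) fun j => ?_
  · refine eq_univ_of_forall fun x => ?_
    obtain ⟨j, hj, hx⟩ := piece_cover hm x
    exact mem_iUnion.2 ⟨⟨j, hj⟩, hx⟩
  · obtain ⟨q, -, hq⟩ := hu.2 j j.2
    exact q.continuous.continuousOn.congr hq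

theorem spl_eventually {j : ℕ} {q : Polynomial ℝ} (hj : j < m)
    (hq : ∀ x ∈ pieceSet m j, u x = q.eval x) {x : ℝ} (hx : x ∈ pieceInt m j) :
    u =ᶠ[nhds x] fun y => q.eval y := by
  filter_upwards [(pieceInt_open m j).mem_nhds hx] with y hy using hq y (pieceInt_sub hj hy)

theorem spl_deriv_int {j : ℕ} {q : Polynomial ℝ} (hj : j < m)
    (hq : ∀ x ∈ pieceSet m j, u x = q.eval x) {x : ℝ} (hx : x ∈ pieceInt m j) :
    HasDerivAt u (q.derivative.eval x) x :=
  (q.hasDerivAt x).congr_of_eventuallyEq (spl_eventually hj hq hx)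

theorem spl_diff (hm : 1 ≤ m) (hu : IsSpline m p u) {x : ℝ} (hx : x ∉ knots m) :
    DifferentiableAt ℝ u x := by
  obtain ⟨j, hj, hx'⟩ := piece_cover hm x
  obtain ⟨q, -, hq⟩ := hu.2 j hj
  exact (spl_deriv_int hj hq (mem_pieceInt_of_not_knot hj hx' hx)).differentiableAt

theorem spl_contDiffAt (hm : 1 ≤ m) (hu : IsSpline m p u) {x : ℝ} (hx : x ∉ knots m) (n : ℕ) :
    ContDiffAt ℝ n u x := by
  obtain ⟨j, hj, hx'⟩ := piece_cover hm x
  obtain ⟨q, -, hq⟩ := hu.2 j hj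
  have := spl_eventually hj hq (mem_pieceInt_of_not_knot hj hx' hx)
  exact ((by simpa using q.contDiff_aeval (𝕜 := ℝ) n : ContDiff ℝ n fun y => q.eval y).contDiffAt).congr_of_eventuallyEq this

theorem ae_not_knot (m : ℕ) : ∀ᵐ x ∂(volume : Measure ℝ), x ∉ knots m :=
  (knots_finite m).countable.ae_notMem _

theorem spl_deriv_bdd (hm : 1 ≤ m) (hu : IsSpline m p u) :
    ∃ C, ∀ x ∈ Icc (0:ℝ) 1, x ∉ knots m → ‖deriv u x‖ ≤ C := by
  choose! q hq1 hq using hu.2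
  have hb : ∀ j, ∃ C, ∀ x ∈ Icc (0:ℝ) 1, ‖(q j).derivative.eval x‖ ≤ C := fun j =>
    isCompact_Icc.exists_bound_of_continuousOn (q j).derivative.continuous.continuousOn
  choose C hC using hb
  refine ⟨∑ j ∈ Finset.range m, C j, fun x hx hk => ?_⟩
  obtain ⟨j, hj, hx'⟩ := piece_cover hm x
  rw [(spl_deriv_int hj (hq j hj) (mem_pieceInt_of_not_knot hj hx' hk)).deriv]
  refine (hC j x hx).trans ?_
  exact Finset.single_le_sum (f := C) (fun i _ => (norm_nonneg _).trans (hC i x hx))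
    (Finset.mem_range.2 hj)

theorem spl_deriv_memLp (hm : 1 ≤ m) (hu : IsSpline m p u) : MemLp (deriv u) 2 μI := by
  obtain ⟨C, hC⟩ := spl_deriv_bdd hm hu
  refine MemLp.of_bound (measurable_deriv u).aestronglyMeasurable C ?_
  filter_upwards [ae_restrict_of_ae (ae_not_knot m), ae_restrict_mem measurableSet_Ioo] with x h1 h2
  exact hC x (Ioo_subset_Icc_self h2) h1

theorem cont_memLp (hu : Continuous u) : MemLp u 2 μI := by
  obtain ⟨C, hC⟩ := isCompact_Icc.exists_bound_of_continuousOn (s := Icc (0:ℝ) 1) hu.continuousOn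
  refine MemLp.of_bound hu.aestronglyMeasurable C ?_
  filter_upwards [ae_restrict_mem measurableSet_Ioo] with x h2
  exact hC x (Ioo_subset_Icc_self h2)

theorem ii_of_int {f : ℝ → ℝ} (hf : Integrable f μI) {x : ℝ} (h0 : 0 ≤ x) (h1 : x ≤ 1) :
    IntervalIntegrable f volume 0 x := by
  rw [intervalIntegrable_iff_integrableOn_Ioo_of_le h0]
  exact IntegrableOn.mono_set (hf : IntegrableOn f (Ioo 0 1) volume) (Ioo_subset_Ioo_right h1)

theorem spl_ftc (hm : 1 ≤ m) (hu : IsSpline m p u) {x : ℝ} (h0 : 0 ≤ x) (h1 : x ≤ 1) :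
    u x = u 0 + ∫ t in (0:ℝ)..x, deriv u t := by
  rw [integral_eq_of_hasDerivAt_off_countable u (deriv u) (knots_finite m).countable
    (spl_cont hm hu).continuousOn (fun t ht => (spl_diff hm hu ht.2).hasDerivAt)
    (ii_of_int ((spl_deriv_memLp hm hu).integrable (by norm_num)) h0 h1)]
  ring

theorem spl_ibp (hm : 1 ≤ m) {p' : ℕ} {v : ℝ → ℝ} (hu : IsSpline m p u) (hv : IsSpline m p' v)
    (h0 : u 0 * v 0 = 0) (h1 : u 1 * v 1 = 0) :
    ∫ x, deriv u x * v x ∂μI = -∫ x, u x * deriv v x ∂μI := by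
  have i1 : Integrable (fun x => deriv u x * v x) μI :=
    (spl_deriv_memLp hm hu).integrable_mul (cont_memLp (spl_cont hm hv))
  have i2 : Integrable (fun x => u x * deriv v x) μI :=
    (cont_memLp (spl_cont hm hu)).integrable_mul (spl_deriv_memLp hm hv)
  have := integral_eq_of_hasDerivAt_off_countable (a := 0) (b := 1) (fun x => u x * v x)
    (fun x => deriv u x * v x + u x * deriv v x) (knots_finite m).countable
    ((spl_cont hm hu).mul (spl_cont hm hv)).continuousOn
    (fun t ht => (spl_diff hm hu ht.2).hasDerivAt.mul (spl_diff hm hv ht.2).hasDerivAt)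
    (ii_of_int (i1.add i2) zero_le_one le_rfl)
  rw [← int01, integral_add i1 i2, h0, h1] at this
  linarith

theorem spl_deriv_spl (hm : 1 ≤ m) (hu : IsSpline m (p + 2) u) : IsSpline m (p + 1) (deriv u) := by
  have hc : ContDiffOn ℝ ((p:ℕ) + 1 : WithTop ℕ∞) u (Ioo 0 1) := by
    have := hu.1
    simpa using this
  rw [contDiffOn_succ_iff_deriv_of_isOpen isOpen_Ioo] at hc
  refine ⟨by simpa using hc.2.2, fun j hj => ?_⟩
  obtain ⟨q, hqd, hq⟩ := hu.2 j hj
  refine ⟨q.derivative, (Polynomial.natDegree_derivative_le q).trans (by omega), fun x hx => ?_⟩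
  have hd : DifferentiableAt ℝ u x := by
    by_cases hk : x ∈ knots m
    · exact (hc.1 x (knots_sub hk)).differentiableAt (isOpen_Ioo.mem_nhds (knots_sub hk))
    · exact spl_diff hm hu hk
  have h1 : HasDerivWithinAt u (deriv u x) (pieceSet m j) x := hd.hasDerivAt.hasDerivWithinAt
  have h2 : HasDerivWithinAt u (q.derivative.eval x) (pieceSet m j) x :=
    (q.hasDerivAt x).hasDerivWithinAt.congr hq (hq x hx)
  exact (piece_uniqueDiff hj x hx).eq_deriv _ h1 h2

def Cls (m p : ℕ) (b : Bool) (u : ℝ → ℝ) : Prop :=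
  IsSpline m p u ∧ ∀ k < p, (k % 2 = if b then 0 else 1) →
      iteratedDeriv k u 0 = 0 ∧ iteratedDeriv k u 1 = 0

theorem Cls_deriv (hm : 1 ≤ m) {b : Bool} (hu : Cls m (p + 2) b u) :
    Cls m (p + 1) (!b) (deriv u) := by
  refine ⟨spl_deriv_spl hm hu.1, fun k hk hk2 => ?_⟩
  have := hu.2 (k + 1) (by omega) (by cases b <;> simp at hk2 ⊢ <;> omega)
  rwa [iteratedDeriv_succ'] at this

theorem lin_elem (α β a h : ℝ) (h0 : 0 < h) :
    h ^ 2 * ∫ _ in a..(a + h), β ^ 2 ≤ 12 * ∫ x in a..(a + h), (α + β * x) ^ 2 := by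
  have h1 : ∫ x in a..(a + h), (α + β * x) ^ 2 =
      (α ^ 2 * (a + h) + α * β * (a + h) ^ 2 + β ^ 2 * (a + h) ^ 3 / 3) -
      (α ^ 2 * a + α * β * a ^ 2 + β ^ 2 * a ^ 3 / 3) := by
    refine intervalIntegral.integral_eq_sub_of_hasDerivAt
      (f := fun x => α ^ 2 * x + α * β * x ^ 2 + β ^ 2 * x ^ 3 / 3) (fun x _ => ?_)
      (Continuous.intervalIntegrable (by fun_prop) _ _)
    have := (((hasDerivAt_id x).const_mul (α ^ 2)).add ((hasDerivAt_pow 2 x).const_mul (α * β))).add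
      (((hasDerivAt_pow 3 x).const_mul (β ^ 2)).div_const 3)
    refine HasDerivAt.congr_deriv (f' := _) this ?_
    simp; ring
  rw [h1, intervalIntegral.integral_const, smul_eq_mul]
  have : 0 ≤ h * (2 * α + β * (2 * a + h)) ^ 2 := by positivity
  nlinarith

theorem inv_base (hm : 1 ≤ m) (hu : IsSpline m 1 u) :
    ∫ x, deriv u x ^ 2 ∂μI ≤ 12 * (m:ℝ) ^ 2 * ∫ x, u x ^ 2 ∂μI := by
  have hm0 : (0:ℝ) < m := by exact_mod_cast hm
  have hsum : ∀ f : ℝ → ℝ, Integrable f μI → ∫ x, f x ∂μI =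
      ∑ j ∈ Finset.range m, ∫ x in ((j:ℕ):ℝ) / m..((j + 1 : ℕ):ℝ) / m, f x := by
    intro f hf
    rw [intervalIntegral.sum_integral_adjacent_intervals (a := fun j : ℕ => (j:ℝ) / m)]
    · rw [int01]; simp [hm0.ne']
    · intro k hk
      have hk' : ((k + 1 : ℕ):ℝ) ≤ m := by exact_mod_cast hk
      have : IntervalIntegrable f volume 0 1 := ii_of_int hf zero_le_one le_rfl
      refine this.mono_set ?_
      rw [uIcc_of_le (by gcongr; simp), uIcc_of_le zero_le_one]
      refine Icc_subset_Icc (by positivity) ?_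
      rw [div_le_one hm0]; exact hk'
  rw [hsum _ (spl_deriv_memLp hm hu).integrable_sq, hsum _ (cont_memLp (spl_cont hm hu)).integrable_sq,
    Finset.mul_sum]
  refine Finset.sum_le_sum fun j hj => ?_
  have hj := Finset.mem_range.1 hj
  obtain ⟨q, hqd, hq⟩ := hu.2 j hj
  rw [Polynomial.eq_X_add_C_of_natDegree_le_one hqd] at hq
  set β := q.coeff 1
  set α := q.coeff 0
  have hle : ((j:ℕ):ℝ) / m ≤ ((j + 1 : ℕ):ℝ) / m := by gcongr; simp
  have e1 : ∫ x in ((j:ℕ):ℝ) / m..((j + 1 : ℕ):ℝ) / m, deriv u x ^ 2 =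
      ∫ x in ((j:ℕ):ℝ) / m..((j + 1 : ℕ):ℝ) / m, β ^ 2 := by
    refine intervalIntegral.integral_congr_Ioo_of_le hle fun x hx => ?_
    have := spl_deriv_int hj hq (Ioo_sub_pieceInt hj (by push_cast at hx; exact hx))
    simp only [this.deriv]; simp
  have e2 : ∫ x in ((j:ℕ):ℝ) / m..((j + 1 : ℕ):ℝ) / m, u x ^ 2 =
      ∫ x in ((j:ℕ):ℝ) / m..((j + 1 : ℕ):ℝ) / m, (α + β * x) ^ 2 := by
    refine intervalIntegral.integral_congr_Ioo_of_le hle fun x hx => ?_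
    have := hq x (pieceInt_sub hj (Ioo_sub_pieceInt hj (by push_cast at hx; exact hx)))
    simp only [this]; simp; ring
  have := lin_elem α β ((j:ℝ) / m) (1 / m) (by positivity)
  rw [show (j:ℝ) / m + 1 / m = ((j + 1 : ℕ):ℝ) / m by push_cast; ring] at this
  rw [e1, e2]
  have h3 := mul_le_mul_of_nonneg_left this (sq_nonneg (m:ℝ))
  calc _ = (m:ℝ) ^ 2 * ((1 / (m:ℝ)) ^ 2 * ∫ x in ((j:ℕ):ℝ) / m..((j + 1 : ℕ):ℝ) / m, β ^ 2) := by
        rw [← mul_assoc, ← mul_pow, mul_one_div_cancel hm0.ne']; simp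
    _ ≤ _ := h3
    _ = _ := by ring

theorem cs_int {f g : ℝ → ℝ} (hf : MemLp f 2 μI) (hg : MemLp g 2 μI) :
    (∫ x, f x * g x ∂μI) ^ 2 ≤ (∫ x, f x ^ 2 ∂μI) * ∫ x, g x ^ 2 ∂μI := by
  have h := real_inner_mul_inner_self_le (hf.toLp f) (hg.toLp g)
  have e : ∀ {a b : ℝ → ℝ} (ha : MemLp a 2 μI) (hb : MemLp b 2 μI),
      inner ℝ (ha.toLp a) (hb.toLp b) = ∫ x, a x * b x ∂μI := by
    intro a b ha hb
    rw [HI_inner]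
    refine integral_congr_ae ?_
    filter_upwards [ha.coeFn_toLp, hb.coeFn_toLp] with x h1 h2
    rw [h1, h2]
  rw [e, e, e] at h
  simpa only [pow_two] using h

theorem inv_ineq (hm : 1 ≤ m) {b : Bool} (hu : Cls m (p + 1) b u) :
    ∫ x, deriv u x ^ 2 ∂μI ≤ 12 * (m:ℝ) ^ 2 * ∫ x, u x ^ 2 ∂μI := by
  induction p generalizing b u with
  | zero => exact inv_base hm hu.1
  | succ p ih =>
    have hd := Cls_deriv hm hu
    have h1 := ih hd
    have hz : u 0 * deriv u 0 = 0 ∧ u 1 * deriv u 1 = 0 := by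
      cases b with
      | false =>
        have := hu.2 1 (by omega) (by simp)
        rw [iteratedDeriv_one] at this
        simp [this]
      | true =>
        have := hu.2 0 (by omega) (by simp)
        rw [iteratedDeriv_zero] at this
        simp [this]
    have h2 := spl_ibp hm hu.1 hd.1 hz.1 hz.2
    have h3 := cs_int (cont_memLp (spl_cont hm hu.1)) (spl_deriv_memLp hm hd.1)
    simp only [← pow_two] at h2
    set A := ∫ x, deriv u x ^ 2 ∂μI
    set U := ∫ x, u x ^ 2 ∂μI
    have hA : 0 ≤ A := integral_nonneg fun _ => sq_nonneg _
    have hU : 0 ≤ U := integral_nonneg fun _ => sq_nonneg _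
    have h4 : A ^ 2 ≤ U * (12 * (m:ℝ) ^ 2 * A) := by
      rw [h2, neg_sq, ← h2]
      exact h3.trans (mul_le_mul_of_nonneg_left h1 hU)
    rcases hA.eq_or_lt with h0 | h0
    · rw [← h0]; positivity
    · nlinarith

theorem inv_ineq0 (hm : 1 ≤ m) (hp : 1 ≤ p) (hu : IsSpline0 m p u) :
    ∫ x, deriv u x ^ 2 ∂μI ≤ 12 * (m:ℝ) ^ 2 * ∫ x, u x ^ 2 ∂μI := by
  obtain ⟨p, rfl⟩ : ∃ q, p = q + 1 := ⟨p - 1, by omega⟩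
  refine inv_ineq (b := false) hm ⟨hu.1, fun k hk hk2 => ?_⟩
  simp at hk2
  have := hu.2 (k / 2) (by omega)
  rwa [show 2 * (k / 2) + 1 = k by omega] at this

end

section absd
variable {V : Type} [AddCommGroup V] [Module ℝ V]

abbrev coreOf (B : V →ₗ[ℝ] V →ₗ[ℝ] ℝ) (hs : ∀ x y, B x y = B y x)
    (hn : ∀ x, 0 ≤ B x x) (hd : ∀ x, B x x = 0 → x = 0) : InnerProductSpace.Core ℝ V where
  inner x y := B x y
  conj_inner_symm x y := by simp [hs y x]
  re_inner_nonneg x := by simpa using hn x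
  add_left x y z := by simp
  smul_left x y r := by simp
  definite x h := hd x h

theorem abs_diag [FiniteDimensional ℝ V] (B A : V →ₗ[ℝ] V →ₗ[ℝ] ℝ) (hs : ∀ x y, B x y = B y x)
    (hn : ∀ x, 0 ≤ B x x) (hd : ∀ x, B x x = 0 → x = 0)
    (hAs : ∀ x y, A x y = A y x) (hAn : ∀ x, 0 ≤ A x x) :
    ∃ (n : ℕ) (e : Module.Basis (Fin n) ℝ V) (l : Fin n → ℝ), (∀ k, 0 ≤ l k) ∧
      (∀ i j, B (e i) (e j) = if i = j then 1 else 0) ∧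
      (∀ i j, A (e i) (e j) = if i = j then l i else 0) := by
  let c := coreOf B hs hn hd
  let : NormedAddCommGroup V := c.toNormedAddCommGroup
  let : InnerProductSpace ℝ V := InnerProductSpace.ofCore c.toCore
  have hin : ∀ x y : V, inner ℝ x y = B x y := fun x y => rfl
  -- operator representing A
  let T : V →ₗ[ℝ] V :=
    { toFun := fun x => (InnerProductSpace.toDual ℝ V).symm (LinearMap.toContinuousLinearMap (A x))
      map_add' := fun x y => by simp
      map_smul' := fun r x => by simp }
  have hT : ∀ x y, inner ℝ (T x) y = A x y := by
    intro x y
    simp [T]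
  have hsym : T.IsSymmetric := by
    intro x y
    rw [hT, real_inner_comm, hT, hAs]
  refine ⟨Module.finrank ℝ V, (hsym.eigenvectorBasis rfl).toBasis, hsym.eigenvalues rfl, ?_, ?_, ?_⟩
  · intro k
    have h1 := hT (hsym.eigenvectorBasis rfl k) (hsym.eigenvectorBasis rfl k)
    rw [hsym.apply_eigenvectorBasis, inner_smul_left] at h1
    simp at h1
    rw [h1]; exact hAn _
  · intro i j
    rw [← hin]
    simp [orthonormal_iff_ite.1 (hsym.eigenvectorBasis rfl).orthonormal i j]
  · intro i j
    rw [← hT]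
    simp only [OrthonormalBasis.coe_toBasis]
    rw [hsym.apply_eigenvectorBasis, inner_smul_left, 
      orthonormal_iff_ite.1 (hsym.eigenvectorBasis rfl).orthonormal i j]
    simp

theorem abs_proj [FiniteDimensional ℝ V] (B : V →ₗ[ℝ] V →ₗ[ℝ] ℝ) (hs : ∀ x y, B x y = B y x)
    (hn : ∀ x, 0 ≤ B x x) (hd : ∀ x, B x x = 0 → x = 0) (W : Submodule ℝ V) :
    ∃ Q : V →ₗ[ℝ] V, (∀ x, Q x ∈ W) ∧ ∀ x, ∀ w ∈ W, B (x - Q x) w = 0 := by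
  let c := coreOf B hs hn hd
  let : NormedAddCommGroup V := c.toNormedAddCommGroup
  let : InnerProductSpace ℝ V := InnerProductSpace.ofCore c.toCore
  have hin : ∀ x y : V, inner ℝ x y = B x y := fun x y => rfl
  refine ⟨(W.starProjection : V →ₗ[ℝ] V), fun x => ?_, fun x w hw => ?_⟩
  · exact W.starProjection_apply_mem x
  · rw [← hin, real_inner_comm]
    exact W.sub_starProjection_mem_orthogonal x w hw

theorem bil_add (A : V →ₗ[ℝ] V →ₗ[ℝ] ℝ) (x y : V) :
    A (x + y) (x + y) = A x x + A x y + A y x + A y y := by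
  simp only [map_add, LinearMap.add_apply]; ring

theorem abs_cs (A : V →ₗ[ℝ] V →ₗ[ℝ] ℝ) (hAn : ∀ x, 0 ≤ A x x)
    (x y : V) : A (x + y) (x + y) ≤ 2 * A x x + 2 * A y y := by
  have := hAn (x - y)
  simp only [map_add, map_sub, LinearMap.add_apply, LinearMap.sub_apply] at *
  linarith

/-- bounds for the projector -/
theorem abs_bounds (B A : V →ₗ[ℝ] V →ₗ[ℝ] ℝ) (hs : ∀ x y, B x y = B y x)
    (hn : ∀ x, 0 ≤ B x x) (hd : ∀ x, B x x = 0 → x = 0) (hAs : ∀ x y, A x y = A y x) (hAn : ∀ x, 0 ≤ A x x)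
    (W : Submodule ℝ V) (Q : V →ₗ[ℝ] V) (hQ : ∀ x, Q x ∈ W)
    (hQo : ∀ x, ∀ w ∈ W, B (x - Q x) w = 0) (M : ℝ) (hM : 0 < M)
    (hinv : ∀ w ∈ W, A w w ≤ 12 * M ^ 2 * B w w)
    (happ : ∀ x, ∃ w ∈ W, A w (x - w) = 0 ∧ B (x - w) (x - w) ≤ (1 / M) ^ 2 * A (x - w) (x - w))
    (x : V) :
    B (Q x) (Q x) ≤ B x x ∧ B (x - Q x) (x - Q x) ≤ B x x ∧
    A (Q x) (Q x) ≤ 26 * A x x ∧ A (x - Q x) (x - Q x) ≤ 26 * A x x ∧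
    B (x - Q x) (x - Q x) ≤ (1 / M) ^ 2 * A x x ∧
    ∀ N : ℝ, 0 ≤ N → (∀ y, (A x y) ^ 2 ≤ N * B y y) → A (x - Q x) (x - Q x) ≤ 26 * ((1 / M) ^ 2 * N) := by
  have pyth : ∀ y, ∀ w ∈ W, B (y - w) (y - w) = B (y - Q y) (y - Q y) + B (Q y - w) (Q y - w) := by
    intro y w hw
    have h := hQo y (Q y - w) (W.sub_mem (hQ y) hw)
    have h' := hs (y - Q y) (Q y - w)
    have e : y - w = (y - Q y) + (Q y - w) := by abel
    rw [e, bil_add, ← h', h]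
    ring
  have hB1 : ∀ y, B (Q y) (Q y) ≤ B y y := by
    intro y
    have h1 := pyth y 0 W.zero_mem
    have h2 := hn (y - Q y)
    simp only [sub_zero] at h1
    linarith
  have hB2 : B (x - Q x) (x - Q x) ≤ B x x := by
    have h1 := pyth x 0 W.zero_mem
    have h2 := hn (Q x)
    simp only [sub_zero] at h1
    linarith
  obtain ⟨w, hw, hAw, hBw⟩ := happ x
  have hQw : Q w = w := by
    have h1 := hQo w (w - Q w) (W.sub_mem hw (hQ w))
    exact (sub_eq_zero.1 (hd _ h1)).symm
  have hAx : A x x = A w w + A (x - w) (x - w) := by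
    have h' := hAs w (x - w)
    have e : x = w + (x - w) := by abel
    have : A x x = A (w + (x - w)) (w + (x - w)) := by rw [← e]
    rw [this, bil_add, ← h', hAw]
    ring
  have hM2 : 12 * M ^ 2 * ((1 / M) ^ 2 * A (x - w) (x - w)) = 12 * A (x - w) (x - w) := by
    field_simp
  have hAQ : A (Q (x - w)) (Q (x - w)) ≤ 12 * A (x - w) (x - w) := by
    refine (hinv _ (hQ _)).trans ?_
    rw [← hM2]
    have := hB1 (x - w)
    gcongr
    linarith
  have n1 := hAn w
  have n2 := hAn (x - w)
  have hA5 : A (x - Q x) (x - Q x) ≤ 26 * A (x - w) (x - w) := by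
    have e : x - Q x = (x - w) + -(Q (x - w)) := by rw [map_sub, hQw]; abel
    rw [e]
    refine (abs_cs A hAn _ _).trans ?_
    simp only [map_neg, LinearMap.neg_apply, neg_neg]
    linarith
  have hB5 : B (x - Q x) (x - Q x) ≤ (1 / M) ^ 2 * A (x - w) (x - w) := by
    have h1 := pyth x w hw
    have h2 := hn (Q x - w)
    linarith
  refine ⟨hB1 x, hB2, ?_, ?_, ?_, ?_⟩
  · have e : Q x = w + Q (x - w) := by rw [map_sub, hQw]; abel
    rw [e]
    refine (abs_cs A hAn _ _).trans ?_
    linarith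
  · linarith
  · refine hB5.trans ?_
    gcongr
    linarith
  · intro N hN0 hN
    refine hA5.trans ?_
    gcongr
    have h1 := hN (x - w)
    have h2 : A x (x - w) = A (x - w) (x - w) := by
      have e : A x (x - w) = A (w + (x - w)) (x - w) := by rw [add_sub_cancel]
      rw [e, map_add, LinearMap.add_apply, hAw, zero_add]
    rw [h2] at h1
    have h3 : A (x - w) (x - w) ^ 2 ≤ N * ((1 / M) ^ 2 * A (x - w) (x - w)) :=
      h1.trans (by gcongr)
    rcases n2.eq_or_lt with h | h
    · rw [← h]; positivity
    · have : A (x - w) (x - w) * A (x - w) (x - w) ≤ ((1 / M) ^ 2 * N) * A (x - w) (x - w) := by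
        nlinarith
      exact le_of_mul_le_mul_right this h

end absd

theorem isSpline_add {m p : ℕ} {u v : ℝ → ℝ} (hu : IsSpline m p u) (hv : IsSpline m p v) :
    IsSpline m p (u + v) := by
  refine ⟨hu.1.add hv.1, fun j hj => ?_⟩
  obtain ⟨q, hq, hqe⟩ := hu.2 j hj
  obtain ⟨r, hr, hre⟩ := hv.2 j hj
  exact ⟨q + r, (Polynomial.natDegree_add_le q r).trans (max_le hq hr), fun x hx => by
    simp [hqe x hx, hre x hx]⟩

theorem isSpline_smul {m p : ℕ} {u : ℝ → ℝ} (c : ℝ) (hu : IsSpline m p u) :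
    IsSpline m p (c • u) := by
  refine ⟨hu.1.const_smul c, fun j hj => ?_⟩
  obtain ⟨q, hq, hqe⟩ := hu.2 j hj
  exact ⟨c • q, (Polynomial.natDegree_smul_le c q).trans hq, fun x hx => by
    simp [hqe x hx]⟩

def Spl (m p : ℕ) : Submodule ℝ (ℝ → ℝ) where
  carrier := {u | IsSpline m p u}
  add_mem' := isSpline_add
  zero_mem' := ⟨contDiffOn_const, fun j _ => ⟨0, by simp, fun x _ => by simp⟩⟩
  smul_mem' := fun c _ h => isSpline_smul c h

theorem zero_not_knot (m : ℕ) : (0:ℝ) ∉ knots m := fun h => lt_irrefl _ (knots_sub h).1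
theorem one_not_knot (m : ℕ) : (1:ℝ) ∉ knots m := fun h => lt_irrefl _ (knots_sub h).2

/-- only meaningful for `1 ≤ m` -/
def Spl0 (m p : ℕ) (hm : 1 ≤ m) : Submodule ℝ (ℝ → ℝ) where
  carrier := {u | IsSpline0 m p u}
  add_mem' := by
    rintro u v hu hv
    refine ⟨isSpline_add hu.1 hv.1, fun l hl => ?_⟩
    rw [iteratedDeriv_add (spl_contDiffAt hm hu.1 (zero_not_knot m) _) (spl_contDiffAt hm hv.1 (zero_not_knot m) _),
      iteratedDeriv_add (spl_contDiffAt hm hu.1 (one_not_knot m) _) (spl_contDiffAt hm hv.1 (one_not_knot m) _),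
      (hu.2 l hl).1, (hu.2 l hl).2, (hv.2 l hl).1, (hv.2 l hl).2]
    simp
  zero_mem' := ⟨(Spl m p).zero_mem, fun l _ => by simp⟩
  smul_mem' := by
    rintro c u hu
    refine ⟨isSpline_smul c hu.1, fun l hl => ?_⟩
    rw [iteratedDeriv_const_smul (spl_contDiffAt hm hu.1 (zero_not_knot m) _),
      iteratedDeriv_const_smul (spl_contDiffAt hm hu.1 (one_not_knot m) _), (hu.2 l hl).1, (hu.2 l hl).2]
    simp

theorem isSpline_nested {m p : ℕ} (hm : m % 2 = 0) (hm2 : 2 ≤ m) {u : ℝ → ℝ} (hu : IsSpline (m / 2) p u) :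
    IsSpline m p u := by
  refine ⟨hu.1, fun j hj => ?_⟩
  obtain ⟨q, hq, hqe⟩ := hu.2 (j / 2) (by omega)
  refine ⟨q, hq, fun x hx => hqe x ?_⟩
  rw [mem_piece hj] at hx
  rw [mem_piece (by omega)]
  obtain ⟨k, rfl⟩ : ∃ k, m = 2 * k := ⟨m / 2, by omega⟩
  have hk : 2 * k / 2 = k := by omega
  rw [hk]
  obtain ⟨h1, h2⟩ := hx
  have hjl : (2 * ((j / 2 : ℕ):ℝ)) ≤ j := by exact_mod_cast (by omega : 2 * (j / 2) ≤ j)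
  have hju : (j:ℝ) + 1 ≤ 2 * ((j / 2 : ℕ):ℝ) + 2 := by exact_mod_cast (by omega : j + 1 ≤ 2 * (j / 2) + 2)
  push_cast at h1 h2
  constructor
  · rcases h1 with h | h
    · left; omega
    · right; linarith
  · rcases h2 with h | h
    · left; omega
    · right; linarith

def smp (m p : ℕ) (j : ℕ) (i : Fin (p + 1)) : ℝ := ((j:ℝ) + ((i:ℕ) + 1) / (p + 2)) / m

theorem smp_mem {m p j : ℕ} (hj : j < m) (i : Fin (p + 1)) :
    smp m p j i ∈ Ioo ((j:ℝ) / m) (((j:ℝ) + 1) / m) := by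
  have hm0 : (0:ℝ) < m := by exact_mod_cast (by omega : 0 < m)
  have h1 : (0:ℝ) < ((i:ℕ) + 1) / (p + 2) := by positivity
  have h2 : (((i:ℕ):ℝ) + 1) / (p + 2) < 1 := by
    rw [div_lt_one (by positivity)]
    exact_mod_cast (by omega : (i:ℕ) + 1 < p + 2)
  unfold smp
  constructor
  · gcongr; linarith
  · gcongr

theorem smp_inj {m p j : ℕ} (hj : j < m) : Function.Injective (smp m p j) := by
  have hm0 : (0:ℝ) < m := by exact_mod_cast (by omega : 0 < m)
  intro a b hab
  unfold smp at hab
  field_simp at hab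
  have : ((a:ℕ):ℝ) = ((b:ℕ):ℝ) := by linarith
  exact Fin.ext (by exact_mod_cast this)

theorem spl_zero {m p : ℕ} (hm : 1 ≤ m) {u : ℝ → ℝ} (hu : IsSpline m p u)
    (h : ∀ j < m, ∀ i, u (smp m p j i) = 0) : u = 0 := by
  funext x
  obtain ⟨j, hj, hx⟩ := piece_cover hm x
  obtain ⟨q, hq, hqe⟩ := hu.2 j hj
  have : q = 0 := by
    refine Polynomial.eq_zero_of_natDegree_lt_card_of_eval_eq_zero q (smp_inj (p := p) hj) (fun i => ?_) ?_
    · rw [← hqe _ (pieceInt_sub hj (Ioo_sub_pieceInt hj (smp_mem hj i))), h j hj i]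
    · simpa using Nat.lt_succ_of_le hq
  rw [hqe x hx, this]; simp

theorem spl_findim {m : ℕ} (p : ℕ) (hm : 1 ≤ m) : FiniteDimensional ℝ (Spl m p) := by
  let Φ : Spl m p →ₗ[ℝ] (Fin m → Fin (p + 1) → ℝ) :=
    { toFun := fun u j i => u.1 (smp m p j i)
      map_add' := fun u v => by ext; simp
      map_smul' := fun c v => by ext; simp }
  refine Module.Finite.of_injective Φ ?_
  rw [← LinearMap.ker_eq_bot, LinearMap.ker_eq_bot']
  intro u hu
  refine Subtype.ext (spl_zero hm u.2 fun j hj i => ?_)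
  exact congrFun (congrFun hu ⟨j, hj⟩) i

theorem spl_definite {m p : ℕ} (hm : 1 ≤ m) {u : ℝ → ℝ} (hu : IsSpline m p u)
    (h : ∫ x, u x * u x ∂μI = 0) : u = 0 := by
  have hc := spl_cont hm hu
  have hi : Integrable (fun x => u x * u x) μI := (cont_memLp hc).integrable_mul (cont_memLp hc)
  rw [integral_eq_zero_iff_of_nonneg (fun x => mul_self_nonneg _) hi] at h
  have h2 : u =ᵐ[μI] fun _ => (0:ℝ) := by
    filter_upwards [h] with x hx
    simpa using hx
  have h3 := Measure.eqOn_open_of_ae_eq h2 isOpen_Ioo hc.continuousOn continuousOn_const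
  refine spl_zero hm hu fun j hj i => h3 ?_
  have hm0 : (0:ℝ) < m := by exact_mod_cast (by omega : 0 < m)
  have := smp_mem hj i
  have hjm : (j:ℝ) + 1 ≤ m := by exact_mod_cast hj
  refine ⟨lt_of_le_of_lt (by positivity) this.1, this.2.trans_le ?_⟩
  rw [div_le_one hm0]; exact hjm

theorem deriv_lin_add {m p : ℕ} (hm : 1 ≤ m) {u v : ℝ → ℝ} (hu : IsSpline m p u) (hv : IsSpline m p v) :
    deriv (u + v) =ᵐ[μI] deriv u + deriv v := by
  filter_upwards [ae_restrict_of_ae (ae_not_knot m)] with x hx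
  exact deriv_add (spl_diff hm hu hx) (spl_diff hm hv hx)

theorem int_mul_lp {f g : ℝ → ℝ} (hf : MemLp f 2 μI) (hg : MemLp g 2 μI) :
    Integrable (fun x => f x * g x) μI := hf.integrable_mul hg

def bB {m : ℕ} (p : ℕ) (hm : 1 ≤ m) : Spl m p →ₗ[ℝ] Spl m p →ₗ[ℝ] ℝ :=
  LinearMap.mk₂ ℝ (fun u v => ∫ x, u.1 x * v.1 x ∂μI)
    (by
      intro u v w
      rw [← integral_add (int_mul_lp (cont_memLp (spl_cont hm u.2)) (cont_memLp (spl_cont hm w.2)))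
        (int_mul_lp (cont_memLp (spl_cont hm v.2)) (cont_memLp (spl_cont hm w.2)))]
      simp [add_mul])
    (by
      intro c u v
      simp [mul_assoc, integral_const_mul])
    (by
      intro u v w
      rw [← integral_add (int_mul_lp (cont_memLp (spl_cont hm u.2)) (cont_memLp (spl_cont hm v.2)))
        (int_mul_lp (cont_memLp (spl_cont hm u.2)) (cont_memLp (spl_cont hm w.2)))]
      simp [mul_add])
    (by
      intro c u v
      simp [mul_left_comm, integral_const_mul])

theorem bB_apply {m : ℕ} (p : ℕ) (hm : 1 ≤ m) (u v : Spl m p) : bB p hm u v = ∫ x, u.1 x * v.1 x ∂μI := rfl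

theorem dA_add {m p : ℕ} (hm : 1 ≤ m) (u v w : Spl m p) :
    ∫ x, deriv (u + v).1 x * deriv w.1 x ∂μI =
      ∫ x, deriv u.1 x * deriv w.1 x ∂μI + ∫ x, deriv v.1 x * deriv w.1 x ∂μI := by
  rw [← integral_add (int_mul_lp (spl_deriv_memLp hm u.2) (spl_deriv_memLp hm w.2))
    (int_mul_lp (spl_deriv_memLp hm v.2) (spl_deriv_memLp hm w.2))]
  refine integral_congr_ae ?_
  filter_upwards [deriv_lin_add hm u.2 v.2] with x hx
  rw [Submodule.coe_add, hx]; simp [add_mul]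

theorem dA_smul {m p : ℕ} (c : ℝ) (u w : Spl m p) :
    ∫ x, deriv (c • u).1 x * deriv w.1 x ∂μI = c * ∫ x, deriv u.1 x * deriv w.1 x ∂μI := by
  rw [← integral_const_mul]
  refine integral_congr_ae (Filter.Eventually.of_forall fun x => ?_)
  simp only [Submodule.coe_smul]
  rw [show deriv (c • u.1) x = c * deriv u.1 x from by rw [deriv_const_smul_field]; rfl]; ring

theorem dA_comm {m p : ℕ} (u w : Spl m p) :
    ∫ x, deriv u.1 x * deriv w.1 x ∂μI = ∫ x, deriv w.1 x * deriv u.1 x ∂μI := by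
  simp [mul_comm]

def bA {m : ℕ} (p : ℕ) (hm : 1 ≤ m) : Spl m p →ₗ[ℝ] Spl m p →ₗ[ℝ] ℝ :=
  LinearMap.mk₂ ℝ (fun u v => ∫ x, deriv u.1 x * deriv v.1 x ∂μI)
    (dA_add hm) dA_smul
    (by
      intro u v w
      rw [dA_comm, dA_add hm, dA_comm v, dA_comm w])
    (by
      intro c u v
      rw [dA_comm, dA_smul, dA_comm v]; rfl)

theorem bA_apply {m : ℕ} (p : ℕ) (hm : 1 ≤ m) (u v : Spl m p) :
    bA p hm u v = ∫ x, deriv u.1 x * deriv v.1 x ∂μI := rfl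


theorem bB_symm {m : ℕ} (p : ℕ) (hm : 1 ≤ m) (u v : Spl m p) : bB p hm u v = bB p hm v u := by
  simp [bB_apply, mul_comm]
theorem bB_nonneg {m : ℕ} (p : ℕ) (hm : 1 ≤ m) (u : Spl m p) : 0 ≤ bB p hm u u :=
  integral_nonneg fun _ => mul_self_nonneg _
theorem bB_def {m : ℕ} (p : ℕ) (hm : 1 ≤ m) (u : Spl m p) (h : bB p hm u u = 0) : u = 0 :=
  Subtype.ext (spl_definite hm u.2 h)
theorem bA_symm {m : ℕ} (p : ℕ) (hm : 1 ≤ m) (u v : Spl m p) : bA p hm u v = bA p hm v u := by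
  simp [bA_apply, mul_comm]
theorem bA_nonneg {m : ℕ} (p : ℕ) (hm : 1 ≤ m) (u : Spl m p) : 0 ≤ bA p hm u u :=
  integral_nonneg fun _ => mul_self_nonneg _

theorem deriv_lin_sub {m p : ℕ} (hm : 1 ≤ m) {u v : ℝ → ℝ} (hu : IsSpline m p u) (hv : IsSpline m p v) :
    deriv (u - v) =ᵐ[μI] deriv u - deriv v := by
  filter_upwards [ae_restrict_of_ae (ae_not_knot m)] with x hx
  exact deriv_sub (spl_diff hm hu hx) (spl_diff hm hv hx)

theorem happ_spl {m M p : ℕ} (hm : 1 ≤ m) (hM : 1 ≤ M) (hp : 1 ≤ p)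
    (hn : ∀ u, IsSpline M p u → IsSpline m p u) (x : Spl m p) :
    ∃ w ∈ (Spl0 M p hM).comap (Spl m p).subtype, bA p hm w (x - w) = 0 ∧
      bB p hm (x - w) (x - w) ≤ (1 / (M:ℝ)) ^ 2 * bA p hm (x - w) (x - w) := by
  obtain ⟨q, rfl⟩ : ∃ q, p = q + 1 := ⟨p - 1, by omega⟩
  obtain ⟨w, w', hw, hww, h1, h2⟩ := approx1D M q hM x.1 (deriv x.1) (spl_deriv_memLp hm x.2)
    (fun t ht => spl_ftc hm x.2 ht.1.le ht.2.le)
  have hwm := hn w hw.1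
  have hd := deriv_lin_sub hm x.2 hwm
  refine ⟨⟨w, hwm⟩, hw, ?_, ?_⟩
  · rw [bA_apply, ← h1]
    refine integral_congr_ae ?_
    filter_upwards [hd, hww] with t h3 h4
    simp only [Submodule.coe_sub]
    rw [h3, h4, Pi.sub_apply, h4]
  · rw [bA_apply, bB_apply]
    have e1 : ∫ t, (x - ⟨w, hwm⟩ : Spl m (q+1)).1 t * (x - ⟨w, hwm⟩ : Spl m (q+1)).1 t ∂μI =
        ∫ t, (x.1 t - w t) ^ 2 ∂μI := by
      refine integral_congr_ae (Filter.Eventually.of_forall fun t => ?_)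
      simp only [Submodule.coe_sub, Pi.sub_apply]; ring
    have e2 : ∫ t, deriv (x - ⟨w, hwm⟩ : Spl m (q+1)).1 t * deriv (x - ⟨w, hwm⟩ : Spl m (q+1)).1 t ∂μI =
        ∫ t, (deriv x.1 t - w' t) ^ 2 ∂μI := by
      refine integral_congr_ae ?_
      filter_upwards [hd, hww] with t h3 h4
      simp only [Submodule.coe_sub]
      rw [h3, Pi.sub_apply, h4]; ring
    rw [e1, e2]; exact h2

theorem hinv_spl {m M p : ℕ} (hm : 1 ≤ m) (hM : 1 ≤ M) (hp : 1 ≤ p) (w : Spl m p)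
    (hw : w ∈ (Spl0 M p hM).comap (Spl m p).subtype) :
    bA p hm w w ≤ 12 * (M:ℝ) ^ 2 * bB p hm w w := by
  have := inv_ineq0 hM hp (u := w.1) hw
  simpa [bA_apply, bB_apply, pow_two] using this

/-- the data produced in one dimension -/
structure OneD (m p n : ℕ) (e : Fin n → ℝ → ℝ) (l : Fin n → ℝ) (Q : Bool → Matrix (Fin n) (Fin n) ℝ)
    (P : Matrix (Fin n) (Fin n) ℝ) : Prop where
  l_nonneg : ∀ k, 0 ≤ l k
  spl : ∀ k, IsSpline m p (e k)
  span : ∀ u, IsSpline m p u → ∃ x : Fin n → ℝ, u = fun t => ∑ k, x k * e k t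
  orth : ∀ i j, ∫ t, e i t * e j t ∂μI = if i = j then 1 else 0
  aorth : ∀ i j, ∫ t, deriv (e i) t * deriv (e j) t ∂μI = if i = j then l i else 0
  Qmem : ∀ a j, IsSplineC m p a fun t => ∑ k, Q a k j * e k t
  Qfix : ∀ a (y : Fin n → ℝ), IsSplineC m p a (fun t => ∑ k, y k * e k t) → ∀ j, ∑ k, Q a k j * y k = y j
  Pmem : ∀ j, IsSpline (m / 2) p fun t => ∑ k, P k j * e k t
  QB : ∀ a (x : Fin n → ℝ), ∑ k, (Q a).mulVec x k ^ 2 ≤ ∑ k, x k ^ 2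
  QA : ∀ a (x : Fin n → ℝ), ∑ k, l k * (Q a).mulVec x k ^ 2 ≤ 26 * ∑ k, l k * x k ^ 2
  PB : ∀ (x : Fin n → ℝ), ∑ k, P.mulVec x k ^ 2 ≤ ∑ k, x k ^ 2
  PA : ∀ (x : Fin n → ℝ), ∑ k, l k * P.mulVec x k ^ 2 ≤ 26 * ∑ k, l k * x k ^ 2
  P1B : ∀ (x : Fin n → ℝ), ∑ k, (1 - P).mulVec x k ^ 2 ≤ 4 / (m:ℝ) ^ 2 * ∑ k, l k * x k ^ 2
  P1A : ∀ (x : Fin n → ℝ), ∑ k, l k * (1 - P).mulVec x k ^ 2 ≤ 104 / (m:ℝ) ^ 2 * ∑ k, l k ^ 2 * x k ^ 2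

theorem oneD_exists {m p : ℕ} (hm : m % 2 = 0) (hm2 : 2 ≤ m) (hp : 1 ≤ p) :
    ∃ n e l Q P, OneD m p n e l Q P := by
  have hm1 : 1 ≤ m := by omega
  have hM1 : 1 ≤ m / 2 := by omega
  have := spl_findim p hm1
  obtain ⟨n, b, l, hl, hbo, hba⟩ := abs_diag (bB p hm1) (bA p hm1) (bB_symm p hm1) (bB_nonneg p hm1)
    (bB_def p hm1) (bA_symm p hm1) (bA_nonneg p hm1)
  set W0 := (Spl0 m p hm1).comap (Spl m p).subtype with hW0
  set Wc := (Spl0 (m / 2) p hM1).comap (Spl m p).subtype with hWc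
  obtain ⟨Q, hQ, hQo⟩ := abs_proj (bB p hm1) (bB_symm p hm1) (bB_nonneg p hm1) (bB_def p hm1) W0
  obtain ⟨P, hP, hPo⟩ := abs_proj (bB p hm1) (bB_symm p hm1) (bB_nonneg p hm1) (bB_def p hm1) Wc
  have bQ := abs_bounds (bB p hm1) (bA p hm1) (bB_symm p hm1) (bB_nonneg p hm1) (bB_def p hm1)
    (bA_symm p hm1) (bA_nonneg p hm1) W0 Q hQ hQo m (by exact_mod_cast hm1)
    (hinv_spl hm1 hm1 hp) (happ_spl hm1 hm1 hp fun _ h => h)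
  have bP := abs_bounds (bB p hm1) (bA p hm1) (bB_symm p hm1) (bB_nonneg p hm1) (bB_def p hm1)
    (bA_symm p hm1) (bA_nonneg p hm1) Wc P hP hPo ((m / 2 : ℕ):ℝ) (by exact_mod_cast hM1)
    (hinv_spl hm1 hM1 hp) (happ_spl hm1 hM1 hp fun _ h => isSpline_nested hm hm2 h)
  -- coordinates
  let c : (Fin n → ℝ) → Spl m p := fun x => ∑ k, x k • b k
  have cB : ∀ x y, bB p hm1 (c x) (c y) = ∑ k, x k * y k := by
    intro x y
    simp [c, hbo, mul_comm]
  have cA : ∀ x y, bA p hm1 (c x) (c y) = ∑ k, l k * (x k * y k) := by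
    intro x y
    simp [c, hba, mul_comm, mul_left_comm]
  have cM : ∀ (T : Spl m p →ₗ[ℝ] Spl m p) x, c ((LinearMap.toMatrix b b T).mulVec x) = T (c x) := by
    intro T x
    have hr : b.repr (c x) = x := by
      have := b.repr_sum_self x
      simpa [c] using this
    have := LinearMap.toMatrix_mulVec_repr b b T (c x)
    rw [hr] at this
    rw [this]
    exact b.sum_repr _
  have cf : ∀ x, (c x).1 = fun t => ∑ k, x k * (b k).1 t := by
    intro x; ext t
    simp [c, Finset.sum_apply]
  have ccol : ∀ (T : Spl m p →ₗ[ℝ] Spl m p) j,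
      (T (b j)).1 = fun t => ∑ k, LinearMap.toMatrix b b T k j * (b k).1 t := by
    intro T j
    have h1 : c (Pi.single j 1) = b j := by simp [c]
    have h2 := cM T (Pi.single j 1)
    rw [h1] at h2
    rw [← h2, cf]
    simp
  have c1 : ∀ (T : Spl m p →ₗ[ℝ] Spl m p) , 1 - LinearMap.toMatrix b b T = LinearMap.toMatrix b b (1 - T) := by
    intro T
    have h1 : LinearMap.toMatrix b b (1 : Spl m p →ₗ[ℝ] Spl m p) = 1 := LinearMap.toMatrix_one b
    rw [← h1]
    exact ((LinearMap.toMatrix b b).toLinearMap.map_sub 1 T).symm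
  have hsur : ∀ u : Spl m p, c (b.repr u) = u := fun u => b.sum_repr u
  have hBj : ∀ (T : Spl m p →ₗ[ℝ] Spl m p) j y, bB p hm1 (T (b j)) (c y) =
      ∑ k, LinearMap.toMatrix b b T k j * y k := by
    intro T j y
    have h1 : c (Pi.single j 1) = b j := by simp [c]
    rw [← h1, ← cM, cB]; simp
  have hBj' : ∀ j y, bB p hm1 (b j) (c y) = y j := by
    intro j y
    have h1 : c (Pi.single j 1) = b j := by simp [c]
    rw [← h1, cB]; simp [Pi.single_apply]
  refine ⟨n, fun k => (b k).1, l, fun a => LinearMap.toMatrix b b (if a then 1 - Q else Q),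
    LinearMap.toMatrix b b P, hl, fun k => (b k).2, ?_, hbo, hba, ?_, ?_, ?_, ?_, ?_, ?_, ?_, ?_, ?_⟩
  · intro u hu
    refine ⟨b.repr ⟨u, hu⟩, ?_⟩
    rw [← cf, hsur]
  · intro a j
    rw [← ccol]
    cases a
    · exact hQ _
    · refine ⟨Subtype.property _, fun v hv => ?_⟩
      have := hQo (b j) ⟨v, hv.1⟩ hv
      exact this
  · intro a y hy j
    rw [← cf] at hy
    rw [← hBj]
    have e := hBj' j y
    cases a
    · have := hQo (b j) (c y) hy
      rw [map_sub, LinearMap.sub_apply] at this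
      simp; linarith
    · have := hy.2 _ (hQ (b j))
      have h3 : bB p hm1 (c y) (Q (b j)) = 0 := this
      rw [bB_symm] at h3
      simp; linarith
  · intro j
    rw [← ccol]
    exact (hP (b j)).1
  · intro a x
    have h := cB ((LinearMap.toMatrix b b (if a then 1 - Q else Q)).mulVec x) ((LinearMap.toMatrix b b (if a then 1 - Q else Q)).mulVec x)
    have h0 := cB x x
    rw [cM] at h
    simp only [pow_two]
    rw [← h, ← h0]
    cases a
    · simpa using (bQ (c x)).1
    · simpa using (bQ (c x)).2.1
  · intro a x
    have h := cA ((LinearMap.toMatrix b b (if a then 1 - Q else Q)).mulVec x) ((LinearMap.toMatrix b b (if a then 1 - Q else Q)).mulVec x)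
    have h0 := cA x x
    rw [cM] at h
    simp only [pow_two]
    rw [← h, ← h0]
    cases a
    · simpa using (bQ (c x)).2.2.1
    · simpa using (bQ (c x)).2.2.2.1
  · intro x
    have h := cB ((LinearMap.toMatrix b b P).mulVec x) ((LinearMap.toMatrix b b P).mulVec x)
    have h0 := cB x x
    rw [cM] at h
    simp only [pow_two]
    rw [← h, ← h0]
    exact (bP (c x)).1
  · intro x
    have h := cA ((LinearMap.toMatrix b b P).mulVec x) ((LinearMap.toMatrix b b P).mulVec x)
    have h0 := cA x x
    rw [cM] at h
    simp only [pow_two]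
    rw [← h, ← h0]
    exact (bP (c x)).2.2.1
  · intro x
    rw [c1]
    have h := cB ((LinearMap.toMatrix b b (1 - P)).mulVec x) ((LinearMap.toMatrix b b (1 - P)).mulVec x)
    have h0 := cA x x
    rw [cM] at h
    have e : (1 / ((m / 2 : ℕ):ℝ)) ^ 2 = 4 / (m:ℝ) ^ 2 := by
      rw [Nat.cast_div (by omega) (by norm_num)]
      field_simp; norm_num
    rw [← e]
    simp only [pow_two (Matrix.mulVec _ _ _), pow_two (x _)]
    rw [← h, ← h0]
    simpa using (bP (c x)).2.2.2.2.1
  · intro x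
    rw [c1]
    have h := cA ((LinearMap.toMatrix b b (1 - P)).mulVec x) ((LinearMap.toMatrix b b (1 - P)).mulVec x)
    rw [cM] at h
    have e : (1 / ((m / 2 : ℕ):ℝ)) ^ 2 = 4 / (m:ℝ) ^ 2 := by
      rw [Nat.cast_div (by omega) (by norm_num)]
      field_simp; norm_num
    have h5 := (bP (c x)).2.2.2.2.2 (∑ k, l k ^ 2 * x k ^ 2)
      (Finset.sum_nonneg fun k _ => by positivity) (fun y => by
        have hy := hsur y
        rw [← hy, cA, cB]
        have := Finset.sum_mul_sq_le_sq_mul_sq Finset.univ (fun k => l k * x k) (b.repr y)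
        simp only [mul_pow, pow_two (b.repr y _)] at this
        simpa [mul_assoc] using this)
    rw [e] at h5
    simp only [pow_two (Matrix.mulVec _ _ _)]
    rw [← h]
    refine le_trans (le_of_eq ?_) (h5.trans (le_of_eq ?_))
    · simp
    · ring


section tens
variable {n : ℕ}

def ten {d : ℕ} (B : Fin d → Matrix (Fin n) (Fin n) ℝ) (c : (Fin d → Fin n) → ℝ)
    (k : Fin d → Fin n) : ℝ := ∑ j, (∏ i, B i (k i) (j i)) * c j

theorem sum_cons {d : ℕ} (F : (Fin (d + 1) → Fin n) → ℝ) :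
    ∑ k, F k = ∑ a, ∑ k', F (Fin.cons a k') := by
  rw [← (Fin.consEquiv (fun _ : Fin (d + 1) => Fin n)).sum_comp, Fintype.sum_prod_type]
  rfl

theorem ten_bound {d : ℕ} (B : Fin d → Matrix (Fin n) (Fin n) ℝ) (w w' : Fin d → Fin n → ℝ)
    (C : Fin d → ℝ) (hw : ∀ i k, 0 ≤ w i k) (hw' : ∀ i k, 0 ≤ w' i k) (hC : ∀ i, 0 ≤ C i)
    (h : ∀ i (x : Fin n → ℝ), ∑ k, w i k * (B i).mulVec x k ^ 2 ≤ C i * ∑ k, w' i k * x k ^ 2)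
    (c : (Fin d → Fin n) → ℝ) :
    ∑ k, (∏ i, w i (k i)) * ten B c k ^ 2 ≤ (∏ i, C i) * ∑ k, (∏ i, w' i (k i)) * c k ^ 2 := by
  induction d with
  | zero => simp [ten]
  | succ d ih =>
    have ht : ∀ a k', ten B c (Fin.cons a k') =
        (B 0).mulVec (fun b => ten (fun i => B i.succ) (fun j => c (Fin.cons b j)) k') a := by
      intro a k'
      unfold ten
      rw [sum_cons]
      simp only [Matrix.mulVec, dotProduct, Finset.mul_sum, Fin.prod_univ_succ, Fin.cons_zero,
        Fin.cons_succ, mul_assoc]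
    rw [sum_cons, sum_cons]
    simp only [ht, Fin.prod_univ_succ, Fin.cons_zero, Fin.cons_succ]
    rw [Finset.sum_comm]
    have h1 : ∀ k' : Fin d → Fin n, ∑ a, w 0 a * (∏ i : Fin d, w i.succ (k' i)) *
          (B 0).mulVec (fun b => ten (fun i => B i.succ) (fun j => c (Fin.cons b j)) k') a ^ 2 ≤
        C 0 * ∑ b, w' 0 b * ((∏ i : Fin d, w i.succ (k' i)) *
          ten (fun i => B i.succ) (fun j => c (Fin.cons b j)) k' ^ 2) := by
      intro k'
      have := mul_le_mul_of_nonneg_left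
        (h 0 (fun b => ten (fun i => B i.succ) (fun j => c (Fin.cons b j)) k'))
        (Finset.prod_nonneg fun i _ => hw i.succ (k' i) : 0 ≤ ∏ i : Fin d, w i.succ (k' i))
      refine le_trans (le_of_eq ?_) (this.trans (le_of_eq ?_))
      · rw [Finset.mul_sum]; exact Finset.sum_congr rfl fun _ _ => by ring
      · rw [mul_left_comm, Finset.mul_sum]; congr 1; exact Finset.sum_congr rfl fun _ _ => by ring
    refine (Finset.sum_le_sum fun k' _ => h1 k').trans ?_
    rw [← Finset.mul_sum, Finset.sum_comm, mul_assoc]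
    refine mul_le_mul_of_nonneg_left ?_ (hC 0)
    rw [Finset.mul_sum]
    refine Finset.sum_le_sum fun b _ => ?_
    have := ih (fun i => B i.succ) (fun i => w i.succ) (fun i => w' i.succ) (fun i => C i.succ)
      (fun i => hw i.succ) (fun i => hw' i.succ) (fun i => hC i.succ) (fun i => h i.succ)
      (fun j => c (Fin.cons b j))
    have := mul_le_mul_of_nonneg_left this (hw' 0 b)
    refine le_trans (le_of_eq ?_) (this.trans (le_of_eq ?_))
    · rw [Finset.mul_sum]
    · rw [mul_left_comm, Finset.mul_sum]; congr 1; exact Finset.sum_congr rfl fun _ _ => by ring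

theorem tele {d : ℕ} (f g : Fin d → ℝ) : ∏ i, f i - ∏ i, g i =
    ∑ t, ∏ i, (if i < t then g i else if i = t then f i - g i else f i) := by
  induction d with
  | zero => simp
  | succ d ih =>
    rw [Fin.sum_univ_succ]
    simp only [Fin.prod_univ_succ]
    have := ih (fun i => f i.succ) (fun i => g i.succ)
    simp only [Fin.succ_lt_succ_iff, Fin.succ_inj, Fin.succ_pos, not_lt_zero, if_true, if_false,
      lt_self_iff_false, Fin.succ_ne_zero]
    rw [← Finset.mul_sum, ← this]
    ring

theorem ten_one {d : ℕ} (c : (Fin d → Fin n) → ℝ) (k) : ten (fun _ => 1) c k = c k := by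
  unfold ten
  have : ∀ j : Fin d → Fin n, (∏ i, (1 : Matrix (Fin n) (Fin n) ℝ) (k i) (j i)) = if k = j then 1 else 0 := by
    intro j
    simp only [Matrix.one_apply]
    by_cases h : k = j
    · subst h; simp
    · rw [if_neg h]
      obtain ⟨i, hi⟩ := Function.ne_iff.1 h
      exact Finset.prod_eq_zero (Finset.mem_univ i) (if_neg hi)
  simp [this]

def Dt {d : ℕ} (P : Matrix (Fin n) (Fin n) ℝ) (t i : Fin d) : Matrix (Fin n) (Fin n) ℝ :=
  if i < t then P else if i = t then 1 - P else 1

theorem ten_tele {d : ℕ} (P : Matrix (Fin n) (Fin n) ℝ) (c : (Fin d → Fin n) → ℝ) (k) :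
    c k - ten (fun _ => P) c k = ∑ t, ten (Dt P t) c k := by
  conv_lhs => rw [← ten_one c k]
  unfold ten
  rw [← Finset.sum_sub_distrib, Finset.sum_comm]
  refine Finset.sum_congr rfl fun j _ => ?_
  rw [← sub_mul, tele, ← Finset.sum_mul]
  congr 1
  refine Finset.sum_congr rfl fun t _ => Finset.prod_congr rfl fun i _ => ?_
  unfold Dt
  split_ifs <;> simp

def wt {d : ℕ} (l : Fin n → ℝ) (s : Option (Fin d)) (i : Fin d) (k : Fin n) : ℝ :=
  if s = some i then l k else 1

def Aw {d : ℕ} (l : Fin n → ℝ) (k : Fin d → Fin n) : ℝ := ∑ s : Option (Fin d), ∏ i, wt l s i (k i)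

theorem wt_nonneg {d : ℕ} {l : Fin n → ℝ} (hl : ∀ k, 0 ≤ l k) (s : Option (Fin d)) (i k) : 0 ≤ wt l s i k := by
  unfold wt; split_ifs; exacts [hl k, zero_le_one]

theorem wt_none {d : ℕ} {l : Fin n → ℝ} (k : Fin d → Fin n) : ∏ i, wt l none i (k i) = 1 := by
  simp [wt]

theorem wt_some {d : ℕ} {l : Fin n → ℝ} (k : Fin d → Fin n) (t) : ∏ i, wt l (some t) i (k i) = l (k t) := by
  simp [wt]

theorem wt_le {d : ℕ} {l : Fin n → ℝ} (hl : ∀ k, 0 ≤ l k) (s : Option (Fin d)) (k : Fin d → Fin n) :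
    ∏ i, wt l s i (k i) ≤ Aw l k :=
  Finset.single_le_sum (f := fun s => ∏ i, wt l s i (k i))
    (fun s _ => Finset.prod_nonneg fun i _ => wt_nonneg hl s i _) (Finset.mem_univ s)

theorem Aw_one {d : ℕ} {l : Fin n → ℝ} (hl : ∀ k, 0 ≤ l k) (k : Fin d → Fin n) : 1 ≤ Aw l k := by
  have := wt_le hl none k
  rwa [wt_none] at this

variable {m p : ℕ} {e : Fin n → ℝ → ℝ} {l : Fin n → ℝ} {Q : Bool → Matrix (Fin n) (Fin n) ℝ}
  {P : Matrix (Fin n) (Fin n) ℝ}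

theorem ten_Q {d : ℕ} (H : OneD m p n e l Q P) (α : Fin d → Bool) (s : Option (Fin d)) (c : (Fin d → Fin n) → ℝ) :
    ∑ k, (∏ i, wt l s i (k i)) * ten (fun i => Q (α i)) c k ^ 2 ≤
      26 ^ d * ∑ k, (∏ i, wt l s i (k i)) * c k ^ 2 := by
  have := ten_bound (fun i => Q (α i)) (wt l s) (wt l s) (fun _ => 26) (wt_nonneg H.l_nonneg s)
    (wt_nonneg H.l_nonneg s) (fun _ => by norm_num) (fun i x => by
      by_cases h : s = some i
      · simpa [wt, h] using H.QA (α i) x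
      · simp only [wt, h, if_false, one_mul]
        have := H.QB (α i) x
        have h0 : 0 ≤ ∑ k, x k ^ 2 := Finset.sum_nonneg fun k _ => sq_nonneg _
        linarith) c
  simpa using this

theorem ten_D {d : ℕ} (H : OneD m p n e l Q P) (t : Fin d) (s : Option (Fin d)) (c : (Fin d → Fin n) → ℝ) :
    ∑ k, (∏ i, wt l s i (k i)) * ten (Dt P t) c k ^ 2 ≤
      26 ^ d * (4 / (m:ℝ) ^ 2) * ∑ k, Aw l k ^ 2 * c k ^ 2 := by
  have h1 := ten_bound (Dt P t) (wt l s) (fun i k => wt l s i k * wt l (some t) i k)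
    (fun i => 26 * if i = t then 4 / (m:ℝ) ^ 2 else 1) (wt_nonneg H.l_nonneg s)
    (fun i k => mul_nonneg (wt_nonneg H.l_nonneg s i k) (wt_nonneg H.l_nonneg (some t) i k))
    (fun i => by split_ifs <;> positivity) (fun i x => by
      have h0 : 0 ≤ ∑ k, x k ^ 2 := Finset.sum_nonneg fun k _ => sq_nonneg _
      have h0' : 0 ≤ ∑ k, l k * x k ^ 2 :=
        Finset.sum_nonneg fun k _ => mul_nonneg (H.l_nonneg k) (sq_nonneg _)
      rcases lt_trichotomy i t with hit | hit | hit
      · have hne : i ≠ t := hit.ne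
        have hne' : ¬ t = i := hne.symm
        by_cases h : s = some i
        · simpa [wt, h, Dt, hit, hne, hne'] using H.PA x
        · have := H.PB x
          simp [wt, h, Dt, hit, hne, hne']
          linarith
      · subst hit
        by_cases h : s = some i
        · have := H.P1A x
          simp [wt, h, Dt]
          refine this.trans (le_of_eq ?_)
          simp only [pow_two (l _)]
          ring
        · have := H.P1B x
          simp [wt, h, Dt]
          refine this.trans ?_
          rw [mul_assoc]
          have h3 : 0 ≤ 4 / (m:ℝ) ^ 2 * ∑ k, l k * x k ^ 2 := by positivity
          linarith
      · have hne : i ≠ t := hit.ne'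
        have hne' : ¬ t = i := hne.symm
        have hlt : ¬ i < t := hit.asymm
        by_cases h : s = some i
        · simp [wt, h, Dt, hlt, hne, hne']
          linarith
        · simp [wt, h, Dt, hlt, hne, hne']
          linarith) c
  refine h1.trans ?_
  rw [Finset.prod_mul_distrib, Finset.prod_const, Finset.prod_ite_eq' Finset.univ t]
  simp only [Finset.card_univ, Fintype.card_fin, Finset.mem_univ, if_true]
  gcongr with k _
  rw [Finset.prod_mul_distrib, pow_two]
  have := Aw_one H.l_nonneg k
  exact mul_le_mul (wt_le H.l_nonneg s k) (wt_le H.l_nonneg _ k)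
    (Finset.prod_nonneg fun i _ => wt_nonneg H.l_nonneg _ i _) (by linarith)

def Cd (d : ℕ) : ℝ := d * (d * ((d + 1) * (26 ^ d * 4)))

theorem ten_P {d : ℕ} (H : OneD m p n e l Q P) (c : (Fin d → Fin n) → ℝ) :
    ∑ k, Aw l k * (c k - ten (fun _ => P) c k) ^ 2 ≤ Cd d / (m:ℝ) ^ 2 * ∑ k, Aw l k ^ 2 * c k ^ 2 := by
  have h1 : ∀ k, (c k - ten (fun _ => P) c k) ^ 2 ≤ d * ∑ t, ten (Dt P t) c k ^ 2 := by
    intro k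
    rw [ten_tele]
    have := sq_sum_le_card_mul_sum_sq (s := Finset.univ) (f := fun t : Fin d => ten (Dt P t) c k)
    simpa using this
  have hA : ∀ k : Fin d → Fin n, 0 ≤ Aw l k := fun k => zero_le_one.trans (Aw_one H.l_nonneg k)
  calc ∑ k, Aw l k * (c k - ten (fun _ => P) c k) ^ 2
      ≤ ∑ k, Aw l k * (d * ∑ t, ten (Dt P t) c k ^ 2) :=
        Finset.sum_le_sum fun k _ => mul_le_mul_of_nonneg_left (h1 k) (hA k)
    _ = d * ∑ t, ∑ s : Option (Fin d), ∑ k, (∏ i, wt l s i (k i)) * ten (Dt P t) c k ^ 2 := by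
        rw [Finset.mul_sum]
        simp only [Aw, Finset.sum_mul, Finset.mul_sum]
        conv_rhs => enter [2, t]; rw [Finset.sum_comm]
        rw [Finset.sum_comm (s := (Finset.univ : Finset (Fin d)))]
        refine Finset.sum_congr rfl fun k _ => ?_
        refine Finset.sum_congr rfl fun t _ => Finset.sum_congr rfl fun s _ => by ring
    _ ≤ d * ∑ t : Fin d, ∑ s : Option (Fin d), 26 ^ d * (4 / (m:ℝ) ^ 2) * ∑ k, Aw l k ^ 2 * c k ^ 2 := by
        gcongr with t _ s _
        exact ten_D H t s c
    _ = _ := by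
        simp [Cd]; ring

/-- Aubin-Nitsche in coordinates. -/
theorem nitsche {d : ℕ} (H : OneD m p n e l Q P) (hm : 1 ≤ m) (c : (Fin d → Fin n) → ℝ)
    (ho : ∀ c', ∑ k, Aw l k * (c k * ten (fun _ => P) c' k) = 0) :
    (m:ℝ) ^ 2 * ∑ k, c k ^ 2 ≤ Cd d * ∑ k, Aw l k * c k ^ 2 := by
  have hA : ∀ k : Fin d → Fin n, 0 < Aw l k := fun k => zero_lt_one.trans_le (Aw_one H.l_nonneg k)
  have hm0 : (0:ℝ) < m := by exact_mod_cast hm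
  set φ : (Fin d → Fin n) → ℝ := fun k => c k / Aw l k with hφ
  set E := ∑ k, c k ^ 2 with hE
  have h1 := ho φ
  have h2 : E = ∑ k, Aw l k * (c k * (φ k - ten (fun _ => P) φ k)) := by
    simp only [mul_sub, Finset.sum_sub_distrib, h1, sub_zero]
    refine Finset.sum_congr rfl fun k _ => ?_
    have := (hA k).ne'
    simp only [hφ]; field_simp
  have h3 : E ^ 2 ≤ (∑ k, Aw l k * c k ^ 2) * ∑ k, Aw l k * (φ k - ten (fun _ => P) φ k) ^ 2 := by
    have := Finset.sum_mul_sq_le_sq_mul_sq Finset.univ (fun k => Real.sqrt (Aw l k) * c k)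
      (fun k => Real.sqrt (Aw l k) * (φ k - ten (fun _ => P) φ k))
    simp only [mul_pow, Real.sq_sqrt (hA _).le] at this
    refine le_trans (le_of_eq ?_) this
    rw [h2]; congr 1
    refine Finset.sum_congr rfl fun k _ => ?_
    have := Real.mul_self_sqrt (hA k).le
    linear_combination (- c k * (φ k - ten (fun _ => P) φ k)) * this
  have h4 := ten_P H φ
  have h5 : ∑ k, Aw l k ^ 2 * φ k ^ 2 = E := by
    refine Finset.sum_congr rfl fun k _ => ?_
    have := (hA k).ne'
    simp only [hφ]; field_simp
  rw [h5] at h4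
  have hS : 0 ≤ ∑ k, Aw l k * c k ^ 2 := Finset.sum_nonneg fun k _ => mul_nonneg (hA k).le (sq_nonneg _)
  have hE0 : 0 ≤ E := Finset.sum_nonneg fun k _ => sq_nonneg _
  have hC : 0 ≤ Cd d := by unfold Cd; positivity
  rcases hE0.eq_or_lt with h | h
  · rw [← h]; simp; positivity
  have h6 : E ^ 2 ≤ (∑ k, Aw l k * c k ^ 2) * (Cd d / (m:ℝ) ^ 2 * E) :=
    h3.trans (mul_le_mul_of_nonneg_left h4 hS)
  have h7 : E ≤ (∑ k, Aw l k * c k ^ 2) * (Cd d / (m:ℝ) ^ 2) := by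
    refine le_of_mul_le_mul_right ?_ h
    nlinarith
  calc (m:ℝ) ^ 2 * E ≤ (m:ℝ) ^ 2 * ((∑ k, Aw l k * c k ^ 2) * (Cd d / (m:ℝ) ^ 2)) := by gcongr
    _ = _ := by field_simp

end tens

section fun_part
variable {d n : ℕ}

def uf (e : Fin n → ℝ → ℝ) (c : (Fin d → Fin n) → ℝ) : (Fin d → ℝ) → ℝ :=
  fun x => ∑ k, c k * ∏ i, e (k i) (x i)

def gd (e : Fin n → ℝ → ℝ) (s : Option (Fin d)) (i : Fin d) (k : Fin n) : ℝ → ℝ :=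
  if s = some i then deriv (e k) else e k

def ge (e : Fin n → ℝ → ℝ) (c : (Fin d → Fin n) → ℝ) (s : Option (Fin d)) : (Fin d → ℝ) → ℝ :=
  fun x => ∑ k, c k * ∏ i, gd e s i (k i) (x i)

theorem ge_none (e : Fin n → ℝ → ℝ) (c : (Fin d → Fin n) → ℝ) : ge e c none = uf e c := by
  funext x; simp [ge, uf, gd]

theorem prod_sum_eq (F : Fin d → Fin n → ℝ) : ∏ i, ∑ k, F i k = ∑ k : Fin d → Fin n, ∏ i, F i (k i) := by
  rw [Finset.prod_univ_sum, Fintype.piFinset_univ]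

theorem uf_add (e : Fin n → ℝ → ℝ) (c c' : (Fin d → Fin n) → ℝ) : uf e (c + c') = uf e c + uf e c' := by
  funext x; simp [uf, add_mul, Finset.sum_add_distrib]
theorem uf_sub (e : Fin n → ℝ → ℝ) (c c' : (Fin d → Fin n) → ℝ) : uf e (c - c') = uf e c - uf e c' := by
  funext x; simp [uf, sub_mul, Finset.sum_sub_distrib]
theorem uf_smul (e : Fin n → ℝ → ℝ) (a : ℝ) (c : (Fin d → Fin n) → ℝ) : uf e (a • c) = a • uf e c := by
  funext x; simp [uf, mul_assoc, Finset.mul_sum]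

theorem uf_prod (e : Fin n → ℝ → ℝ) (y : Fin d → Fin n → ℝ) :
    uf e (fun k => ∏ i, y i (k i)) = fun x => ∏ i, ∑ k, y i k * e k (x i) := by
  funext x
  simp only [uf, prod_sum_eq, Finset.prod_mul_distrib]

theorem uf_ten (e : Fin n → ℝ → ℝ) (B : Fin d → Matrix (Fin n) (Fin n) ℝ) (c : (Fin d → Fin n) → ℝ) :
    uf e (ten B c) = ∑ j : Fin d → Fin n, c j • fun x => ∏ i, ∑ k, B i k (j i) * e k (x i) := by
  funext x
  simp only [Finset.sum_apply, Pi.smul_apply, smul_eq_mul, prod_sum_eq, uf, ten, Finset.sum_mul,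
    Finset.mul_sum, Finset.prod_mul_distrib]
  rw [Finset.sum_comm]
  exact Finset.sum_congr rfl fun j _ => Finset.sum_congr rfl fun k _ => by ring

variable {m p : ℕ} {e : Fin n → ℝ → ℝ} {l : Fin n → ℝ} {Q : Bool → Matrix (Fin n) (Fin n) ℝ}
  {P : Matrix (Fin n) (Fin n) ℝ}

theorem splC {a : Bool} {f : ℝ → ℝ} (h : IsSplineC m p a f) : IsSpline m p f := by
  cases a
  · exact h.1
  · exact h.1

theorem exists_uf (H : OneD m p n e l Q P) {u : (Fin d → ℝ) → ℝ} (hu : u ∈ TensorSpline d m p) :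
    ∃ c, u = uf e c := by
  induction hu using Submodule.span_induction with
  | mem u hu =>
    obtain ⟨f, hf, rfl⟩ := hu
    choose y hy using fun i => H.span (f i) (hf i)
    refine ⟨fun k => ∏ i, y i (k i), ?_⟩
    rw [uf_prod]
    funext x
    exact Finset.prod_congr rfl fun i _ => congrFun (hy i) (x i)
  | zero => exact ⟨0, by funext x; simp [uf]⟩
  | add u v _ _ hu hv =>
    obtain ⟨c, rfl⟩ := hu
    obtain ⟨c', rfl⟩ := hv
    exact ⟨c + c', (uf_add _ _ _).symm⟩
  | smul a u _ hu =>
    obtain ⟨c, rfl⟩ := hu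
    exact ⟨a • c, (uf_smul _ _ _).symm⟩

theorem exists_uf_sub (H : OneD m p n e l Q P) (α : Fin d → Bool) {u : (Fin d → ℝ) → ℝ}
    (hu : u ∈ TensorSplineSub d m p α) :
    ∃ c, u = uf e c ∧ ∀ c', ∑ k, ten (fun i => Q (α i)) c' k * c k = ∑ k, c' k * c k := by
  induction hu using Submodule.span_induction with
  | mem u hu =>
    obtain ⟨f, hf, rfl⟩ := hu
    choose y hy using fun i => H.span (f i) (splC (hf i))
    refine ⟨fun k => ∏ i, y i (k i), ?_, fun c' => ?_⟩
    · rw [uf_prod]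
      funext x
      exact Finset.prod_congr rfl fun i _ => congrFun (hy i) (x i)
    · have hfix : ∀ i j, ∑ k, Q (α i) k j * y i k = y i j := fun i j =>
        H.Qfix (α i) (y i) (by rw [← hy i]; exact hf i) j
      simp only [ten, Finset.sum_mul]
      rw [Finset.sum_comm]
      refine Finset.sum_congr rfl fun j _ => ?_
      have : ∏ i, y i (j i) = ∑ k : Fin d → Fin n, ∏ i, (Q (α i) (k i) (j i) * y i (k i)) := by
        rw [← prod_sum_eq (fun i k => Q (α i) k (j i) * y i k)]
        exact Finset.prod_congr rfl fun i _ => (hfix i (j i)).symm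
      rw [this, Finset.mul_sum]
      refine Finset.sum_congr rfl fun k _ => ?_
      rw [Finset.prod_mul_distrib]; ring
  | zero => exact ⟨0, by funext x; simp [uf], by simp⟩
  | add u v _ _ hu hv =>
    obtain ⟨c, rfl, h⟩ := hu
    obtain ⟨c', rfl, h'⟩ := hv
    exact ⟨c + c', (uf_add _ _ _).symm, fun c'' => by
      simp [mul_add, Finset.sum_add_distrib, h, h']⟩
  | smul a u _ hu =>
    obtain ⟨c, rfl, h⟩ := hu
    refine ⟨a • c, (uf_smul _ _ _).symm, fun c'' => ?_⟩
    simp only [Pi.smul_apply, smul_eq_mul, mul_left_comm _ a, ← Finset.mul_sum, h]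

theorem ten_Q_mem (H : OneD m p n e l Q P) (α : Fin d → Bool) (c : (Fin d → Fin n) → ℝ) :
    uf e (ten (fun i => Q (α i)) c) ∈ TensorSplineSub d m p α := by
  rw [uf_ten]
  refine Submodule.sum_mem _ fun j _ => Submodule.smul_mem _ _ (Submodule.subset_span ?_)
  exact ⟨fun i t => ∑ k, Q (α i) k (j i) * e k t, fun i => H.Qmem (α i) (j i), rfl⟩

theorem ten_P_mem (H : OneD m p n e l Q P) (c : (Fin d → Fin n) → ℝ) :
    uf e (ten (fun _ => P) c) ∈ TensorSplineCoarse d m p := by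
  rw [uf_ten]
  refine Submodule.sum_mem _ fun j _ => Submodule.smul_mem _ _ (Submodule.subset_span ?_)
  exact ⟨fun i t => ∑ k, P k (j i) * e k t, fun i => H.Pmem (j i), rfl⟩

theorem coarse_le (hm : m % 2 = 0) (hm2 : 2 ≤ m) : TensorSplineCoarse d m p ≤ TensorSpline d m p :=
  Submodule.span_mono (by
    rintro u ⟨f, hf, rfl⟩
    exact ⟨f, fun i => isSpline_nested hm hm2 (hf i), rfl⟩)

theorem cube_meas : (volume : Measure (Fin d → ℝ)).restrict (cube d) = Measure.pi fun _ => μI := by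
  rw [volume_pi]
  exact Measure.restrict_pi_pi (fun _ => volume) fun _ => Ioo (0:ℝ) 1

theorem gd_memLp (H : OneD m p n e l Q P) (hm : 1 ≤ m) (s : Option (Fin d)) (i k) :
    MemLp (gd e s i k) 2 μI := by
  unfold gd
  split_ifs
  · exact spl_deriv_memLp hm (H.spl k)
  · exact cont_memLp (spl_cont hm (H.spl k))

theorem gd_int (H : OneD m p n e l Q P) (s : Option (Fin d)) (i k k') :
    ∫ t, gd e s i k t * gd e s i k' t ∂μI = if k = k' then wt l s i k else 0 := by
  unfold gd wt
  by_cases h : s = some i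
  · simp only [h, if_true]; exact H.aorth k k'
  · simp only [h, if_false]; exact H.orth k k'

theorem prod_integrable (H : OneD m p n e l Q P) (hm : 1 ≤ m) (s : Option (Fin d)) (k k' : Fin d → Fin n) :
    Integrable (fun x : Fin d → ℝ => ∏ i, (gd e s i (k i) (x i) * gd e s i (k' i) (x i)))
      (Measure.pi fun _ => μI) :=
  Integrable.fintype_prod (f := fun i t => gd e s i (k i) t * gd e s i (k' i) t)
    (fun i => int_mul_lp (gd_memLp H hm s i (k i)) (gd_memLp H hm s i (k' i)))

theorem prod_int (H : OneD m p n e l Q P) (s : Option (Fin d)) (k k' : Fin d → Fin n) :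
    ∫ x : Fin d → ℝ, ∏ i, (gd e s i (k i) (x i) * gd e s i (k' i) (x i)) ∂(Measure.pi fun _ => μI) =
      if k = k' then ∏ i, wt l s i (k i) else 0 := by
  rw [integral_fintype_prod_eq_prod (fun i t => gd e s i (k i) t * gd e s i (k' i) t)]
  simp only [gd_int H]
  by_cases h : k = k'
  · subst h; simp
  · rw [if_neg h]
    obtain ⟨i, hi⟩ := Function.ne_iff.1 h
    exact Finset.prod_eq_zero (Finset.mem_univ i) (if_neg hi)

theorem ge_mul (s : Option (Fin d)) (c c' : (Fin d → Fin n) → ℝ) (x) : ge e c s x * ge e c' s x =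
    ∑ k, ∑ k', c k * c' k' * ∏ i, (gd e s i (k i) (x i) * gd e s i (k' i) (x i)) := by
  unfold ge
  rw [Finset.sum_mul_sum]
  refine Finset.sum_congr rfl fun k _ => Finset.sum_congr rfl fun k' _ => ?_
  rw [Finset.prod_mul_distrib]; ring

theorem ge_integrable (H : OneD m p n e l Q P) (hm : 1 ≤ m) (s : Option (Fin d))
    (c c' : (Fin d → Fin n) → ℝ) :
    Integrable (fun x => ge e c s x * ge e c' s x) (Measure.pi fun _ => μI) := by
  simp only [ge_mul]
  exact integrable_finsetSum _ fun k _ => integrable_finsetSum _ fun k' _ =>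
    (prod_integrable H hm s k k').const_mul _

theorem ge_int (H : OneD m p n e l Q P) (hm : 1 ≤ m) (s : Option (Fin d))
    (c c' : (Fin d → Fin n) → ℝ) :
    ∫ x, ge e c s x * ge e c' s x ∂(Measure.pi fun _ => μI) = ∑ k, (∏ i, wt l s i (k i)) * (c k * c' k) := by
  simp only [ge_mul]
  rw [integral_finsetSum _ fun k _ => integrable_finsetSum _ fun k' _ =>
    (prod_integrable H hm s k k').const_mul _]
  refine Finset.sum_congr rfl fun k _ => ?_
  rw [integral_finsetSum _ fun k' _ => (prod_integrable H hm s k k').const_mul _]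
  simp only [integral_const_mul, prod_int H]
  simp [mul_comm]

theorem ipd_uf (H : OneD m p n e l Q P) (hm : 1 ≤ m) (c c' : (Fin d → Fin n) → ℝ) :
    ipd d (uf e c) (uf e c') = ∑ k, c k * c' k := by
  unfold ipd
  rw [cube_meas, ← ge_none, ← ge_none, ge_int H hm]
  simp [wt_none]

theorem pd_uf (H : OneD m p n e l Q P) (hm : 1 ≤ m) (c : (Fin d → Fin n) → ℝ) (i : Fin d) (x : Fin d → ℝ)
    (hx : x i ∉ knots m) : pd d i (uf e c) x = ge e c (some i) x := by
  unfold pd uf ge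
  refine HasDerivAt.deriv ?_
  refine HasDerivAt.fun_sum fun k _ => ?_
  refine HasDerivAt.const_mul _ ?_
  have h1 : ∀ t, ∏ j, e (k j) (Function.update x i t j) =
      e (k i) t * ∏ j ∈ Finset.univ.erase i, e (k j) (x j) := by
    intro t
    rw [← Finset.mul_prod_erase Finset.univ _ (Finset.mem_univ i)]
    simp only [Function.update_self]
    congr 1
    refine Finset.prod_congr rfl fun j hj => ?_
    rw [Function.update_of_ne (Finset.ne_of_mem_erase hj)]
  have h2 : ∏ j, gd e (some i) j (k j) (x j) =
      deriv (e (k i)) (x i) * ∏ j ∈ Finset.univ.erase i, e (k j) (x j) := by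
    rw [← Finset.mul_prod_erase Finset.univ _ (Finset.mem_univ i)]
    congr 1
    · simp [gd]
    · refine Finset.prod_congr rfl fun j hj => ?_
      have : i ≠ j := (Finset.ne_of_mem_erase hj).symm
      simp [gd, this]
  simp only [h1, h2]
  exact (spl_diff hm (H.spl (k i)) hx).hasDerivAt.mul_const _

theorem aForm_uf (H : OneD m p n e l Q P) (hm : 1 ≤ m) (c c' : (Fin d → Fin n) → ℝ) :
    aForm d (uf e c) (uf e c') = ∑ k, Aw l k * (c k * c' k) := by
  unfold aForm
  rw [cube_meas]
  have hae : ∀ᵐ x ∂(Measure.pi fun _ : Fin d => μI), ∀ i, x i ∉ knots m := by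
    refine Filter.eventually_all.2 fun i => ?_
    exact (Measure.tendsto_eval_ae_ae (μ := fun _ : Fin d => μI) (i := i)).eventually
      (ae_restrict_of_ae (ae_not_knot m))
  have : ∀ᵐ x ∂(Measure.pi fun _ : Fin d => μI),
      (∑ i, pd d i (uf e c) x * pd d i (uf e c') x) + uf e c x * uf e c' x =
      ∑ s : Option (Fin d), ge e c s x * ge e c' s x := by
    filter_upwards [hae] with x hx
    rw [Fintype.sum_option, ge_none, ge_none, add_comm]
    congr 1
    exact Finset.sum_congr rfl fun i _ => by rw [pd_uf H hm c i x (hx i), pd_uf H hm c' i x (hx i)]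
  rw [integral_congr_ae this, integral_finsetSum _ fun s _ => ge_integrable H hm s c c']
  simp only [ge_int H hm, Aw, Finset.sum_mul]
  rw [Finset.sum_comm]

theorem l2_uf (H : OneD m p n e l Q P) (hm : 1 ≤ m) (c : (Fin d → Fin n) → ℝ) :
    l2normSqD d (uf e c) = ∑ k, c k ^ 2 := by
  have := ipd_uf H hm c c
  simpa [ipd, l2normSqD, pow_two] using this

end fun_part

theorem main_thm :
    ∀ d : ℕ, 1 ≤ d → ∀ c₁ : ℝ, 0 < c₁ → ∃ c : ℝ, 0 < c ∧
      ∀ m p : ℕ, m % 2 = 0 → 2 ≤ m → 1 ≤ p →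
      ∀ b : (Fin d → Bool) → ((Fin d → ℝ) → ℝ) → ((Fin d → ℝ) → ℝ) → ℝ,
        (∀ α, ∀ u ∈ TensorSplineSub d m p α, ∀ v ∈ TensorSplineSub d m p α,
          b α u v = b α v u) →
        (∀ α, ∀ u ∈ TensorSplineSub d m p α, l2normSqD d u ≠ 0 → 0 < b α u u) →
        (∀ α, ∀ u ∈ TensorSplineSub d m p α,
          b α u u ≤ c₁ * (aForm d u u + (m : ℝ) ^ 2 * l2normSqD d u)) →
        ∀ v : (Fin d → ℝ) → ℝ, v ∈ TensorSpline d m p →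
        ∀ w : (Fin d → ℝ) → ℝ, IsGalerkinCoarseProj d m p v w →
        ∀ z : (Fin d → Bool) → (Fin d → ℝ) → ℝ,
          (∀ α, IsL2ProjSub d m p α (v - w) (z α)) →
          ∑ α : Fin d → Bool, b α (z α) (z α) ≤ c * aForm d v v := by
  intro d _ c₁ hc₁
  have hCd : 0 ≤ Cd d := by unfold Cd; positivity
  refine ⟨2 ^ d * (c₁ * (26 ^ d * (1 + Cd d))), by positivity, ?_⟩
  intro m p hm hm2 hp b _ _ hb v hv w hw z hz
  have hm1 : 1 ≤ m := by omega
  obtain ⟨n, e, l, Q, P, H⟩ := oneD_exists hm hm2 hp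
  obtain ⟨cv, rfl⟩ := exists_uf H hv
  obtain ⟨cw, rfl⟩ := exists_uf H (coarse_le hm hm2 hw.1)
  obtain ⟨ε, hε⟩ : ∃ ε, ε = cv - cw := ⟨_, rfl⟩
  rw [← uf_sub, ← hε] at hz
  have hG : ∀ c', uf e c' ∈ TensorSplineCoarse d m p → ∑ k, Aw l k * (ε k * c' k) = 0 := by
    intro c' hc'
    have := hw.2 _ hc'
    rwa [← uf_sub, ← hε, aForm_uf H hm1] at this
  have hN := nitsche H hm1 ε fun c' => hG _ (ten_P_mem H c')
  have hA : ∀ k : Fin d → Fin n, 0 ≤ Aw l k := fun k => zero_le_one.trans (Aw_one H.l_nonneg k)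
  have hE : ∑ k, Aw l k * ε k ^ 2 ≤ aForm d (uf e cv) (uf e cv) := by
    rw [aForm_uf H hm1]
    have h1 := hG cw hw.1
    have h2 : 0 ≤ ∑ k, Aw l k * cw k ^ 2 := Finset.sum_nonneg fun k _ => mul_nonneg (hA k) (sq_nonneg _)
    have h3 : ∑ k, Aw l k * (cv k * cv k) = ∑ k, Aw l k * ε k ^ 2 + 2 * ∑ k, Aw l k * (ε k * cw k) +
        ∑ k, Aw l k * cw k ^ 2 := by
      rw [Finset.mul_sum, ← Finset.sum_add_distrib, ← Finset.sum_add_distrib]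
      refine Finset.sum_congr rfl fun k _ => ?_
      rw [hε, Pi.sub_apply]; ring
    rw [h3, h1]; linarith
  have hone : ∀ α, b α (z α) (z α) ≤ c₁ * (26 ^ d * (1 + Cd d)) * aForm d (uf e cv) (uf e cv) := by
    intro α
    obtain ⟨hz1, hz2⟩ := hz α
    have hzb := hb α _ hz1
    have hy := Submodule.sub_mem _ hz1 (ten_Q_mem H α ε)
    obtain ⟨cy, hcy, hcy2⟩ := exists_uf_sub H α hy
    have hzz : z α = uf e (cy + ten (fun i => Q (α i)) ε) := by
      rw [uf_add, ← hcy]; simp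
    have h1 := hz2 _ hy
    rw [hcy, hzz, ← uf_sub, ipd_uf H hm1] at h1
    have h2 := hcy2 ε
    have h3 : ∑ k, cy k ^ 2 = 0 := by
      have : ∑ k, (ε - (cy + ten (fun i => Q (α i)) ε)) k * cy k =
          ∑ k, ε k * cy k - ∑ k, cy k ^ 2 - ∑ k, ten (fun i => Q (α i)) ε k * cy k := by
        rw [← Finset.sum_sub_distrib, ← Finset.sum_sub_distrib]
        refine Finset.sum_congr rfl fun k _ => ?_
        simp only [Pi.sub_apply, Pi.add_apply]; ring
      linarith
    have h4 : cy = 0 := by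
      funext k
      have := (Finset.sum_eq_zero_iff_of_nonneg fun k _ => sq_nonneg (cy k)).1 h3 k (Finset.mem_univ k)
      simpa using this
    rw [h4, zero_add] at hzz
    have hq : ∑ k, ten (fun i => Q (α i)) ε k ^ 2 ≤ 26 ^ d * ∑ k, ε k ^ 2 := by
      have := ten_Q H α none ε
      simpa [wt_none] using this
    have hqA : ∑ k, Aw l k * ten (fun i => Q (α i)) ε k ^ 2 ≤ 26 ^ d * ∑ k, Aw l k * ε k ^ 2 := by
      simp only [Aw, Finset.sum_mul]
      rw [Finset.sum_comm, Finset.sum_comm (γ := Fin d → Fin n), Finset.mul_sum]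
      exact Finset.sum_le_sum fun s _ => ten_Q H α s ε
    rw [hzz, aForm_uf H hm1, l2_uf H hm1] at hzb
    rw [hzz]
    refine hzb.trans ?_
    rw [mul_assoc]
    refine mul_le_mul_of_nonneg_left ?_ hc₁.le
    simp only [← pow_two]
    calc _ ≤ 26 ^ d * ∑ k, Aw l k * ε k ^ 2 + (m:ℝ) ^ 2 * (26 ^ d * ∑ k, ε k ^ 2) := by gcongr
      _ = 26 ^ d * (∑ k, Aw l k * ε k ^ 2 + (m:ℝ) ^ 2 * ∑ k, ε k ^ 2) := by ring
      _ ≤ 26 ^ d * (∑ k, Aw l k * ε k ^ 2 + Cd d * ∑ k, Aw l k * ε k ^ 2) := by gcongr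
      _ = 26 ^ d * (1 + Cd d) * ∑ k, Aw l k * ε k ^ 2 := by ring
      _ ≤ _ := by gcongr
  refine (Finset.sum_le_sum fun α _ => hone α).trans (le_of_eq ?_)
  simp
  ring


end SplineMG

namespace SplineMG

/-- Lemma `lem:approx-prop`: if for every `α ∈ {0,1}^d` the local
smoother `L_α` (given through its bilinear form `b α` on `S_α`, symmetric and
positive definite) satisfies `⟨L_α v_α, v_α⟩ ≤ c₁·⟨(A + h⁻²M^d)v_α, v_α⟩` for all
`v_α ∈ S_α`, then the additive subspace correction smoother `L = Σ_α Q_α′ L_α Q_α`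
satisfies `‖(I − T_c)v‖_L ≤ c·‖v‖_A` for all `v ∈ S^d` (stated in squared form:
`Σ_α ⟨L_α Q_α(v − T_c v), Q_α(v − T_c v)⟩ ≤ c·a(v,v)`), where `T_c` is the
`a(·,·)`-orthogonal projector onto `(S_c)^d` and `c` is independent of `h` and `p`. -/
theorem approximation_property_subspace_correction :
    ∀ d : ℕ, 1 ≤ d → ∀ c₁ : ℝ, 0 < c₁ → ∃ c : ℝ, 0 < c ∧
      ∀ m p : ℕ, m % 2 = 0 → 2 ≤ m → 1 ≤ p →
      ∀ b : (Fin d → Bool) → ((Fin d → ℝ) → ℝ) → ((Fin d → ℝ) → ℝ) → ℝ,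
        (∀ α, ∀ u ∈ TensorSplineSub d m p α, ∀ v ∈ TensorSplineSub d m p α,
          b α u v = b α v u) →
        (∀ α, ∀ u ∈ TensorSplineSub d m p α, l2normSqD d u ≠ 0 → 0 < b α u u) →
        (∀ α, ∀ u ∈ TensorSplineSub d m p α,
          b α u u ≤ c₁ * (aForm d u u + (m : ℝ) ^ 2 * l2normSqD d u)) →
        ∀ v : (Fin d → ℝ) → ℝ, v ∈ TensorSpline d m p →
        ∀ w : (Fin d → ℝ) → ℝ, IsGalerkinCoarseProj d m p v w →
        ∀ z : (Fin d → Bool) → (Fin d → ℝ) → ℝ,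
          (∀ α, IsL2ProjSub d m p α (v - w) (z α)) →
          ∑ α : Fin d → Bool, b α (z α) (z α) ≤ c * aForm d v v := by
  exact main_thm

end SplineMG
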